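/- For every 1 < q < +∞ there exists a constant C_q > 0 such that for every divergence-free Schwartz vector field u : ℝ³ → ℝ³ (i.e. each component of u is a Schwartz function and ∇·u = 0), with strain tensor S and vorticity ω = ∇ × u, one has the two-sided bound (1/C_q) ‖e₃ × ω‖_{L^q} ≤ ‖2 S e₃‖_{L^q} ≤ C_q ‖e₃ × ω‖_{L^q}. -/

import Mathlib

open MeasureTheory

noncomputable section

/-- The standard basis vectors of `EuclideanSpace ℝ (Fin 3)`. -/
def ee (i : Fin 3) : EuclideanSpace ℝ (Fin 3) := EuclideanSpace.single i 1

/-- The partial derivative `∂ᵢ uⱼ` of a vector field given by its three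
(Schwartz) components. -/
def pdW (u : Fin 3 → SchwartzMap (EuclideanSpace ℝ (Fin 3)) ℝ) (i j : Fin 3)
    (x : EuclideanSpace ℝ (Fin 3)) : ℝ :=
  fderiv ℝ (u j) x (ee i)

/-- View a triple of reals as a vector in `ℝ³` with the Euclidean norm. -/
def toE3 (f : Fin 3 → ℝ) : EuclideanSpace ℝ (Fin 3) :=
  (WithLp.equiv 2 (Fin 3 → ℝ)).symm f

/-- The strain tensor `S_ij = (∂ᵢ uⱼ + ∂ⱼ uᵢ)/2`. -/
def strainW (u : Fin 3 → SchwartzMap (EuclideanSpace ℝ (Fin 3)) ℝ)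
    (x : EuclideanSpace ℝ (Fin 3)) : Matrix (Fin 3) (Fin 3) ℝ :=
  Matrix.of fun i j => (pdW u i j x + pdW u j i x) / 2

/-- The vorticity `ω = ∇ × u` (with 0-based indices). -/
def vortW (u : Fin 3 → SchwartzMap (EuclideanSpace ℝ (Fin 3)) ℝ)
    (x : EuclideanSpace ℝ (Fin 3)) : Fin 3 → ℝ :=
  ![pdW u 1 2 x - pdW u 2 1 x, pdW u 2 0 x - pdW u 0 2 x, pdW u 0 1 x - pdW u 1 0 x]

/-- The cross product in `ℝ³`. -/
def cross (a b : Fin 3 → ℝ) : Fin 3 → ℝ :=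
  ![a 1 * b 2 - a 2 * b 1, a 2 * b 0 - a 0 * b 2, a 0 * b 1 - a 1 * b 0]

/-!
Let `u` be divergence free, `e` a vector, `f = u · e` and `∂ₑ` the derivative along `e`. The fields
`P = ∇f + ∂ₑu = 2Se` and `M = ∇f - ∂ₑu = e × ω` satisfy `div P = div M = Δf`, because
`div ∂ₑu = ∂ₑ div u = 0`, and `P + M = 2∇f`. It therefore suffices to bound `∇f` in `L^p` by `G`
whenever `Δf = div G`, which is the `L^p` boundedness of the second-order Riesz transforms.

The Riesz transforms are handled by a Bellman function: a nonnegative convex `B(x, y)` of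
`|x|^p + |y|^q` growth whose midpoint convexity defect in the direction `(a, b)` is at least `|ab|`.
The integral of `B(u, φ)` decreases when `u` and `φ` are averaged over a step of a symmetric random
walk, and the total decrease bounds the accumulated products of differences of `u` and `φ`. On the
Fourier side these products carry a multiplier which tends to the Riesz symbol as the steps shrink
and their number grows; this gives the bilinear estimate dual to the `L^p` bound.
-/

open Set Filter
open scoped Topology InnerProductSpace

section ConvexityAlongLines

variable {E F : Type*} [NormedAddCommGroup E] [NormedAddCommGroup F] {r ε : ℝ}

/-- A regularization of `‖z‖ ^ (2 * r)` that is smooth for `ε > 0`; it lets us differentiate twice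
at the origin. -/
def regNormPow (r ε : ℝ) (z : E) : ℝ := (ε + ‖z‖ ^ 2) ^ r

theorem regNormPow_nonneg (hε : 0 ≤ ε) (z : E) : 0 ≤ regNormPow r ε z :=
  Real.rpow_nonneg (by positivity) r

theorem tendsto_regNormPow {p : ℝ} (hp : 0 ≤ p) (z : E) :
    Tendsto (fun ε => regNormPow (p / 2) ε z) (𝓝[>] 0) (𝓝 (‖z‖ ^ p)) := by
  have hcont : Continuous fun ε : ℝ => regNormPow (p / 2) ε z :=
    (continuous_id.add continuous_const).rpow_const fun _ => Or.inr (by positivity)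
  have hzero : regNormPow (p / 2) 0 z = ‖z‖ ^ p := by
    rw [regNormPow, zero_add, ← Real.rpow_natCast, ← Real.rpow_mul (norm_nonneg z), Nat.cast_ofNat,
      mul_div_cancel₀ p two_ne_zero]
  exact hzero ▸ (hcont.tendsto 0).mono_left nhdsWithin_le_nhds

variable [InnerProductSpace ℝ E] [InnerProductSpace ℝ F]

theorem hasDerivAt_add_norm_sq_line (ε : ℝ) (z v : E) (s : ℝ) :
    HasDerivAt (fun s : ℝ => ε + ‖z + s • v‖ ^ 2) (2 * ⟪z + s • v, v⟫_ℝ) s := by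
  simpa only [id_eq, one_smul] using
    ((((hasDerivAt_id s).smul_const v).const_add z).norm_sq).const_add ε

theorem hasDerivAt_regNormPow_line (hε : 0 < ε) (z v : E) (s : ℝ) :
    HasDerivAt (fun s : ℝ => regNormPow r ε (z + s • v))
      (2 * ⟪z + s • v, v⟫_ℝ * r * regNormPow (r - 1) ε (z + s • v)) s :=
  (hasDerivAt_add_norm_sq_line ε z v s).rpow_const (Or.inl (by positivity))

/-- The second derivative of `s ↦ regNormPow r ε (z + s • v)` at the point `w = z + s • v`. -/
def regNormPowHess (r ε : ℝ) (w v : E) : ℝ :=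
  2 * r * (‖v‖ ^ 2 * regNormPow (r - 1) ε w
    + 2 * (r - 1) * ⟪w, v⟫_ℝ ^ 2 * regNormPow (r - 1 - 1) ε w)

theorem hasDerivAt_deriv_regNormPow_line (hε : 0 < ε) (z v : E) (s : ℝ) :
    HasDerivAt (fun s : ℝ => 2 * ⟪z + s • v, v⟫_ℝ * r * regNormPow (r - 1) ε (z + s • v))
      (regNormPowHess r ε (z + s • v) v) s := by
  have inner_deriv : HasDerivAt (fun s : ℝ => ⟪z + s • v, v⟫_ℝ) (‖v‖ ^ 2) s := by
    simpa only [id_eq, one_smul, inner_zero_right, zero_add, real_inner_self_eq_norm_sq] using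
      (((hasDerivAt_id s).smul_const v).const_add z).inner ℝ (hasDerivAt_const s v)
  refine (((inner_deriv.const_mul 2).mul_const r).mul
    (hasDerivAt_regNormPow_line hε z v s)).congr_deriv ?_
  rw [regNormPowHess]
  ring

theorem le_regNormPowHess (hr : 0 ≤ r) (hr1 : r ≤ 1) (hε : 0 < ε) (w v : E) :
    2 * r * (2 * r - 1) * ‖v‖ ^ 2 * regNormPow (r - 1) ε w ≤ regNormPowHess r ε w v := by
  have hQ : 0 < ε + ‖w‖ ^ 2 := by positivity
  have cauchy_schwarz : ⟪w, v⟫_ℝ ^ 2 ≤ ‖v‖ ^ 2 * (ε + ‖w‖ ^ 2) := by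
    nlinarith [sq_le_sq' (neg_le_of_abs_le (abs_real_inner_le_norm w v)) (real_inner_le_norm w v),
      sq_nonneg ‖v‖]
  have key : ⟪w, v⟫_ℝ ^ 2 * regNormPow (r - 1 - 1) ε w ≤ ‖v‖ ^ 2 * regNormPow (r - 1) ε w := by
    rw [regNormPow, regNormPow, Real.rpow_sub_one hQ.ne', mul_div_left_comm, mul_comm (‖v‖ ^ 2)]
    exact mul_le_mul_of_nonneg_left ((div_le_iff₀ hQ).2 cauchy_schwarz) (by positivity)
  have hcoeff : 0 ≤ 4 * r * (1 - r) := mul_nonneg (by linarith) (by linarith)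
  rw [regNormPowHess]
  linarith [mul_le_mul_of_nonneg_left key hcoeff]

theorem regNormPowHess_le (hr : 0 ≤ r) (hr1 : r ≤ 1) (hε : 0 < ε) (w v : E) :
    regNormPowHess r ε w v ≤ 2 * r * ‖v‖ ^ 2 * regNormPow (r - 1) ε w := by
  have : 0 ≤ 4 * r * (1 - r) * (⟪w, v⟫_ℝ ^ 2 * regNormPow (r - 1 - 1) ε w) :=
    mul_nonneg (mul_nonneg (by linarith) (by linarith))
      (mul_nonneg (sq_nonneg _) (regNormPow_nonneg hε.le w))
  rw [regNormPowHess]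
  linarith

theorem convexOn_regNormPow_sub_line (hr : 1 / 2 < r) (hr1 : r ≤ 1) (hε : 0 < ε)
    {z₁ v₁ : E} {z₂ v₂ : F} (hz : ∀ s : ℝ, ‖z₁ + s • v₁‖ ≤ ‖z₂ + s • v₂‖)
    (hv : ‖v₂‖ ^ 2 ≤ 2 * ‖v₁‖ ^ 2) :
    ConvexOn ℝ univ fun s : ℝ =>
      2 / (2 * r - 1) * regNormPow r ε (z₁ + s • v₁) - regNormPow r ε (z₂ + s • v₂) := by
  have deriv₁ s :=
    ((hasDerivAt_regNormPow_line (r := r) hε z₁ v₁ s).const_mul (2 / (2 * r - 1))).sub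
    (hasDerivAt_regNormPow_line (r := r) hε z₂ v₂ s)
  have deriv₂ s :=
    ((hasDerivAt_deriv_regNormPow_line (r := r) hε z₁ v₁ s).const_mul (2 / (2 * r - 1))).sub
    (hasDerivAt_deriv_regNormPow_line (r := r) hε z₂ v₂ s)
  refine convexOn_of_hasDerivWithinAt2_nonneg convex_univ
    (fun s _ => (deriv₁ s).continuousAt.continuousWithinAt)
    (fun s _ => (deriv₁ s).hasDerivWithinAt) (fun s _ => (deriv₂ s).hasDerivWithinAt)
    fun s _ => sub_nonneg.2 ?_
  have hr0 : 0 < r := by linarith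
  have hr' : 0 < 2 * r - 1 := by linarith
  have hmono : regNormPow (r - 1) ε (z₂ + s • v₂) ≤ regNormPow (r - 1) ε (z₁ + s • v₁) :=
    Real.rpow_le_rpow_of_nonpos (by positivity)
      (by gcongr; exact hz s) (by linarith)
  have hpos := regNormPow_nonneg (r := r - 1) hε.le (z₂ + s • v₂)
  calc regNormPowHess r ε (z₂ + s • v₂) v₂
      ≤ 2 * r * ‖v₂‖ ^ 2 * regNormPow (r - 1) ε (z₂ + s • v₂) :=
        regNormPowHess_le hr0.le hr1 hε _ _
    _ ≤ 2 * r * (2 * ‖v₁‖ ^ 2) * regNormPow (r - 1) ε (z₁ + s • v₁) := by gcongr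
    _ = 2 / (2 * r - 1) *
          (2 * r * (2 * r - 1) * ‖v₁‖ ^ 2 * regNormPow (r - 1) ε (z₁ + s • v₁)) := by
        field_simp
    _ ≤ 2 / (2 * r - 1) * regNormPowHess r ε (z₁ + s • v₁) v₁ := by
        gcongr
        exact le_regNormPowHess hr0.le hr1 hε _ _

theorem convexOn_norm_rpow_sub_line {p : ℝ} (hp : 1 < p) (hp2 : p ≤ 2)
    {z₁ v₁ : E} {z₂ v₂ : F} (hz : ∀ s : ℝ, ‖z₁ + s • v₁‖ ≤ ‖z₂ + s • v₂‖)
    (hv : ‖v₂‖ ^ 2 ≤ 2 * ‖v₁‖ ^ 2) :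
    ConvexOn ℝ univ fun s : ℝ => 2 / (p - 1) * ‖z₁ + s • v₁‖ ^ p - ‖z₂ + s • v₂‖ ^ p := by
  have hp0 : 0 ≤ p := by linarith
  have hlim : Tendsto (fun ε s => 2 / (p - 1) * regNormPow (p / 2) ε (z₁ + s • v₁)
      - regNormPow (p / 2) ε (z₂ + s • v₂)) (𝓝[>] 0)
      (𝓝 fun s : ℝ => 2 / (p - 1) * ‖z₁ + s • v₁‖ ^ p - ‖z₂ + s • v₂‖ ^ p) :=
    tendsto_pi_nhds.2 fun s =>
      ((tendsto_regNormPow hp0 _).const_mul _).sub (tendsto_regNormPow hp0 _)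
  have hconv : ∀ᶠ ε in 𝓝[>] (0 : ℝ), ConvexOn ℝ univ fun s : ℝ =>
      2 / (p - 1) * regNormPow (p / 2) ε (z₁ + s • v₁)
        - regNormPow (p / 2) ε (z₂ + s • v₂) := by
    filter_upwards [self_mem_nhdsWithin] with ε hε
    simpa only [mul_div_cancel₀ p (two_ne_zero' ℝ)] using
      convexOn_regNormPow_sub_line (r := p / 2) (by linarith) (by linarith) hε hz hv
  exact isClosed_setOfPred_convexOn.mem_of_tendsto hlim hconv

end ConvexityAlongLines

section Bellman

theorem memLp_ofReal_iff_integrable_abs_rpow {α : Type*} [MeasurableSpace α] {μ : Measure α}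
    {p : ℝ} (hp : 0 < p) {u : α → ℝ} (hu : AEStronglyMeasurable u μ) :
    MemLp u (ENNReal.ofReal p) μ ↔ Integrable (fun x => |u x| ^ p) μ := by
  rw [← integrable_norm_rpow_iff hu (by simpa using hp) ENNReal.ofReal_ne_top,
    ENNReal.toReal_ofReal hp.le]
  rfl

theorem integrable_abs_rpow {α : Type*} [MeasurableSpace α] {μ : Measure α}
    {p : ℝ} (hp : 0 < p) {u : α → ℝ} (hu : MemLp u (ENNReal.ofReal p) μ) :
    Integrable (fun x => |u x| ^ p) μ :=
  (memLp_ofReal_iff_integrable_abs_rpow hp hu.1).1 hu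

/-- A Bellman function for the duality between `L^p` and `L^q`: a nonnegative convex function of
`p`-`q` growth whose midpoint convexity defect in the direction `(a, b)` dominates `|a * b|`. The
absolute value is encoded by a multiplier `σ ∈ [-1, 1]`. -/
structure IsBellman (p q C : ℝ) (B : ℝ → ℝ → ℝ) : Prop where
  convexOn : ConvexOn ℝ univ fun z : ℝ × ℝ => B z.1 z.2
  add_mul_le_midpoint : ∀ x y a b σ : ℝ, |σ| ≤ 1 →
    B x y + σ * (a * b) ≤ (B (x + a) (y + b) + B (x - a) (y - b)) / 2
  nonneg : ∀ x y, 0 ≤ B x y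
  le_rpow : ∀ x y, B x y ≤ C * (|x| ^ p + |y| ^ q)

namespace IsBellman

variable {p q C : ℝ} {B : ℝ → ℝ → ℝ}

theorem swap (h : IsBellman p q C B) : IsBellman q p C fun x y => B y x where
  convexOn := h.convexOn.comp_linearMap (LinearEquiv.prodComm ℝ ℝ ℝ).toLinearMap
  add_mul_le_midpoint x y a b σ hσ := mul_comm a b ▸ h.add_mul_le_midpoint y x b a σ hσ
  nonneg x y := h.nonneg y x
  le_rpow x y := add_comm (|x| ^ q) (|y| ^ p) ▸ h.le_rpow y x

theorem continuous (h : IsBellman p q C B) : Continuous fun z : ℝ × ℝ => B z.1 z.2 :=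
  continuousOn_univ.1 (h.convexOn.continuousOn isOpen_univ)

section Integral

variable {α : Type*} [MeasurableSpace α] {μ : Measure α} {u φ : α → ℝ}

theorem integrable_comp (h : IsBellman p q C B) (hp : 0 < p) (hq : 0 < q)
    (hu : MemLp u (ENNReal.ofReal p) μ) (hφ : MemLp φ (ENNReal.ofReal q) μ) :
    Integrable (fun x => B (u x) (φ x)) μ := by
  refine (((integrable_abs_rpow hp hu).add (integrable_abs_rpow hq hφ)).const_mul C).mono'
    (h.continuous.comp_aestronglyMeasurable (hu.1.prodMk hφ.1)) (ae_of_all _ fun x => ?_)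
  rw [Real.norm_of_nonneg (h.nonneg _ _)]
  exact h.le_rpow _ _

theorem integral_comp_le (h : IsBellman p q C B) (hp : 0 < p) (hq : 0 < q)
    (hu : MemLp u (ENNReal.ofReal p) μ) (hφ : MemLp φ (ENNReal.ofReal q) μ) :
    ∫ x, B (u x) (φ x) ∂μ ≤ C * (∫ x, |u x| ^ p ∂μ + ∫ x, |φ x| ^ q ∂μ) := by
  have hu_int := integrable_abs_rpow hp hu
  have hφ_int := integrable_abs_rpow hq hφ
  rw [← integral_add hu_int hφ_int, ← integral_const_mul]
  exact integral_mono (h.integrable_comp hp hq hu hφ) ((hu_int.add hφ_int).const_mul C)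
    fun x => h.le_rpow _ _

end Integral

end IsBellman

/-- The function `(x, y) ↦ 2 / (p - 1) * |x| ^ p - |(x, y)| ^ p`, which is convex along every line
of slope at most one. -/
def bellmanKernel (p x y : ℝ) : ℝ := 2 / (p - 1) * |x| ^ p - ‖(⟨x, y⟩ : ℂ)‖ ^ p

theorem convexOn_bellmanKernel_line {p : ℝ} (hp : 1 < p) (hp2 : p ≤ 2) (x y a : ℝ) {σ : ℝ}
    (hσ : |σ| ≤ 1) :
    ConvexOn ℝ univ fun s : ℝ => bellmanKernel p (x + s * a) (y + s * (σ * a)) := by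
  have hline (s : ℝ) :
      (⟨x, y⟩ + s • ⟨a, σ * a⟩ : ℂ) = ⟨x + s * a, y + s * (σ * a)⟩ := by
    apply Complex.ext <;> simp
  have hz (s : ℝ) : ‖x + s • a‖ ≤ ‖(⟨x, y⟩ + s • ⟨a, σ * a⟩ : ℂ)‖ := by
    rw [hline]
    exact Complex.abs_re_le_norm ⟨x + s * a, y + s * (σ * a)⟩
  have hv : ‖(⟨a, σ * a⟩ : ℂ)‖ ^ 2 ≤ 2 * ‖a‖ ^ 2 := by
    rw [Complex.sq_norm, Complex.normSq_mk, Real.norm_eq_abs, sq_abs]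
    nlinarith [mul_nonneg (sub_nonneg.2 ((sq_le_one_iff_abs_le_one σ).2 hσ)) (sq_nonneg a)]
  have hconv := convexOn_norm_rpow_sub_line hp hp2 hz hv
  simp only [hline] at hconv
  exact hconv

/-- The Legendre transform in the second variable of `-bellmanKernel p`. It inherits its midpoint
convexity defect from the freedom to move `y` by `σ * a` when `x` moves by `a`. -/
def bellman (p x η : ℝ) : ℝ := ⨆ y : ℝ, (y * η + bellmanKernel p x y)

variable {p q : ℝ}

theorem mul_add_bellmanKernel_le (hpq : p.HolderConjugate q) (x η y : ℝ) :
    y * η + bellmanKernel p x y ≤ 2 / (p - 1) * |x| ^ p + |η| ^ q := by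
  have young := Real.young_inequality y η hpq
  have hy : |y| ^ p ≤ ‖(⟨x, y⟩ : ℂ)‖ ^ p :=
    Real.rpow_le_rpow (abs_nonneg y) (Complex.abs_im_le_norm ⟨x, y⟩) hpq.nonneg
  have hyp : |y| ^ p / p ≤ |y| ^ p := div_le_self (by positivity) hpq.lt.le
  have hηq : |η| ^ q / q ≤ |η| ^ q := div_le_self (by positivity) hpq.symm.lt.le
  rw [bellmanKernel]
  linarith

theorem mul_add_bellmanKernel_le_bellman (hpq : p.HolderConjugate q) (x η y : ℝ) :
    y * η + bellmanKernel p x y ≤ bellman p x η :=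
  le_ciSup (f := fun y => y * η + bellmanKernel p x y)
    ⟨_, forall_mem_range.2 (mul_add_bellmanKernel_le hpq x η)⟩ y

theorem convexOn_bellman (hpq : p.HolderConjugate q) (hp2 : p ≤ 2) :
    ConvexOn ℝ univ fun z : ℝ × ℝ => bellman p z.1 z.2 := by
  refine ⟨convex_univ, fun z _ w _ a b ha hb hab => ciSup_le fun y => ?_⟩
  have kernel_le := (convexOn_bellmanKernel_line hpq.lt hp2 0 y 1 (abs_zero.trans_le zero_le_one)).2
    (mem_univ z.1) (mem_univ w.1) ha hb hab
  have hz := mul_le_mul_of_nonneg_left (mul_add_bellmanKernel_le_bellman hpq z.1 z.2 y) ha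
  have hw := mul_le_mul_of_nonneg_left (mul_add_bellmanKernel_le_bellman hpq w.1 w.2 y) hb
  simp only [smul_eq_mul, zero_add, mul_one, mul_zero, add_zero, Prod.fst_add,
    Prod.snd_add, Prod.smul_fst, Prod.smul_snd] at kernel_le ⊢
  linarith

theorem bellman_add_mul_le_midpoint (hpq : p.HolderConjugate q) (hp2 : p ≤ 2) (x η a b σ : ℝ)
    (hσ : |σ| ≤ 1) :
    bellman p x η + σ * (a * b) ≤
      (bellman p (x + a) (η + b) + bellman p (x - a) (η - b)) / 2 := by
  rw [← le_sub_iff_add_le]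
  refine ciSup_le fun y => ?_
  have kernel_le : bellmanKernel p x y ≤
      (bellmanKernel p (x + a) (y + σ * a) + bellmanKernel p (x - a) (y - σ * a)) / 2 := by
    have := (convexOn_bellmanKernel_line hpq.lt hp2 x y a hσ).2 (mem_univ 1) (mem_univ (-1))
      one_half_pos.le one_half_pos.le (add_halves 1)
    simp only [smul_eq_mul, mul_one, mul_neg, add_neg_cancel, one_mul, neg_mul, zero_mul,
      add_zero, ← sub_eq_add_neg] at this
    linarith
  have hplus := mul_add_bellmanKernel_le_bellman hpq (x + a) (η + b) (y + σ * a)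
  have hminus := mul_add_bellmanKernel_le_bellman hpq (x - a) (η - b) (y - σ * a)
  linarith

theorem isBellman_bellman (hpq : p.HolderConjugate q) (hp2 : p ≤ 2) :
    IsBellman p q (2 / (p - 1)) (bellman p) := by
  have one_le : 1 ≤ 2 / (p - 1) := (one_le_div hpq.sub_one_pos).2 (by linarith)
  refine ⟨convexOn_bellman hpq hp2, bellman_add_mul_le_midpoint hpq hp2, fun x η => ?_,
    fun x η => ciSup_le fun y => ?_⟩
  · have hx : ‖(⟨x, 0⟩ : ℂ)‖ = |x| := Complex.norm_real x
    have kernel_nonneg : 0 ≤ bellmanKernel p x 0 := by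
      rw [bellmanKernel, hx, sub_nonneg]
      exact le_mul_of_one_le_left (by positivity) one_le
    have kernel_le := mul_add_bellmanKernel_le_bellman hpq x η 0
    rw [zero_mul, zero_add] at kernel_le
    exact kernel_nonneg.trans kernel_le
  · rw [mul_add]
    have hη : |η| ^ q ≤ 2 / (p - 1) * |η| ^ q := le_mul_of_one_le_left (by positivity) one_le
    linarith [mul_add_bellmanKernel_le hpq x η y]

theorem exists_isBellman (hpq : p.HolderConjugate q) : ∃ C B, 0 < C ∧ IsBellman p q C B := by
  rcases le_total p 2 with hp | hp
  · exact ⟨_, _, div_pos two_pos hpq.sub_one_pos, isBellman_bellman hpq hp⟩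
  · have hq : q ≤ 2 := by
      have : p + q = p * q := hpq.mul_eq_add.symm
      nlinarith [hpq.symm.pos]
    exact ⟨_, _, div_pos two_pos hpq.symm.sub_one_pos, (isBellman_bellman hpq.symm hq).swap⟩

end Bellman

section RandomWalk

variable {V : Type*} [AddCommGroup V] {ι : Type*} [Fintype ι]

/-- One step of the symmetric random walk which jumps by `± e i` with probability `w i / 2` each,
acting on functions. -/
def stepAvg (w : ι → ℝ) (e : ι → V) (f : V → ℝ) (x : V) : ℝ :=
  ∑ i, w i * ((f (x + e i) + f (x - e i)) / 2)

/-- The symmetric difference of `f` in direction `a`, without normalization. -/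
def centralDiff (a : V) (f : V → ℝ) (x : V) : ℝ := f (x + a) - f (x - a)

variable {p q C : ℝ} {B : ℝ → ℝ → ℝ} {w σ : ι → ℝ} {e : ι → V}

theorem IsBellman.comp_stepAvg_le (hB : IsBellman p q C B) (hw : w ∈ stdSimplex ℝ ι)
    (hσ : ∀ i, |σ i| ≤ 1) (e : ι → V) (u φ : V → ℝ) (x : V) :
    B (stepAvg w e u x) (stepAvg w e φ x) ≤ stepAvg w e (fun y => B (u y) (φ y)) x
      - ∑ i, w i * (σ i / 4 * (centralDiff (e i) u x * centralDiff (e i) φ x)) := by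
  have jensen := hB.convexOn.map_sum_le (t := Finset.univ) (w := w)
    (p := fun i => ((u (x + e i) + u (x - e i)) / 2, (φ (x + e i) + φ (x - e i)) / 2))
    (fun i _ => hw.1 i) hw.2 fun _ _ => mem_univ _
  simp only [Prod.fst_sum, Prod.snd_sum, Prod.smul_fst, Prod.smul_snd, smul_eq_mul] at jensen
  refine jensen.trans ?_
  rw [stepAvg, ← Finset.sum_sub_distrib]
  refine Finset.sum_le_sum fun i _ => ?_
  rw [← mul_sub]
  refine mul_le_mul_of_nonneg_left ?_ (hw.1 i)
  have midpoint := hB.add_mul_le_midpoint ((u (x + e i) + u (x - e i)) / 2)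
    ((φ (x + e i) + φ (x - e i)) / 2) ((u (x + e i) - u (x - e i)) / 2)
    ((φ (x + e i) - φ (x - e i)) / 2) (σ i) (hσ i)
  have half_add (s t : ℝ) : (s + t) / 2 + (s - t) / 2 = s := by ring
  have half_sub (s t : ℝ) : (s + t) / 2 - (s - t) / 2 = t := by ring
  rw [half_add, half_add, half_sub, half_sub] at midpoint
  unfold centralDiff
  linarith

variable [MeasurableSpace V] [MeasurableAdd V] {μ : Measure V} [μ.IsAddRightInvariant]
  {f g : V → ℝ} {r s : ENNReal}

theorem memLp_comp_add_right (hf : MemLp f r μ) (a : V) : MemLp (fun x => f (x + a)) r μ :=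
  hf.comp_measurePreserving (measurePreserving_add_right μ a)

theorem memLp_comp_sub_right (hf : MemLp f r μ) (a : V) : MemLp (fun x => f (x - a)) r μ := by
  simpa only [sub_eq_add_neg] using memLp_comp_add_right hf (-a)

theorem memLp_stepAvg (hf : MemLp f r μ) (w : ι → ℝ) (e : ι → V) : MemLp (stepAvg w e f) r μ := by
  refine memLp_finsetSum _ fun i _ => MemLp.const_mul ?_ (w i)
  simpa only [div_eq_inv_mul, Pi.add_apply] using
    ((memLp_comp_add_right hf (e i)).add (memLp_comp_sub_right hf (e i))).const_mul (2 : ℝ)⁻¹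

theorem memLp_stepAvg_iterate (hf : MemLp f r μ) (w : ι → ℝ) (e : ι → V) (n : ℕ) :
    MemLp ((stepAvg w e)^[n] f) r μ := by
  induction n with
  | zero => exact hf
  | succ n ih => exact Function.iterate_succ_apply' (stepAvg w e) n f ▸ memLp_stepAvg ih w e

theorem memLp_centralDiff (hf : MemLp f r μ) (a : V) : MemLp (centralDiff a f) r μ :=
  (memLp_comp_add_right hf a).sub (memLp_comp_sub_right hf a)

theorem integral_comp_add_mul (f g : V → ℝ) (a : V) :
    ∫ x, f (x + a) * g x ∂μ = ∫ x, f x * g (x - a) ∂μ := by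
  simpa only [add_sub_cancel_right] using
    integral_add_right_eq_self (μ := μ) (fun x => f x * g (x - a)) a

theorem integral_comp_sub_mul (f g : V → ℝ) (a : V) :
    ∫ x, f (x - a) * g x ∂μ = ∫ x, f x * g (x + a) ∂μ := by
  simpa only [← sub_eq_add_neg, sub_neg_eq_add] using integral_comp_add_mul (μ := μ) f g (-a)

theorem integral_centralDiff_mul [r.HolderConjugate s] (hf : MemLp f r μ) (hg : MemLp g s μ)
    (a : V) : ∫ x, centralDiff a f x * g x ∂μ = -∫ x, f x * centralDiff a g x ∂μ := by
  have hf_add : Integrable (fun x => f (x + a) * g x) μ :=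
    (memLp_comp_add_right hf a).integrable_mul hg
  have hf_sub : Integrable (fun x => f (x - a) * g x) μ :=
    (memLp_comp_sub_right hf a).integrable_mul hg
  have hg_add : Integrable (fun x => f x * g (x + a)) μ :=
    hf.integrable_mul (memLp_comp_add_right hg a)
  have hg_sub : Integrable (fun x => f x * g (x - a)) μ :=
    hf.integrable_mul (memLp_comp_sub_right hg a)
  simp only [centralDiff, sub_mul, mul_sub]
  rw [integral_sub hf_add hf_sub, integral_sub hg_add hg_sub, integral_comp_add_mul,
    integral_comp_sub_mul, neg_sub]

theorem integral_stepAvg_mul [r.HolderConjugate s] (hf : MemLp f r μ) (hg : MemLp g s μ)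
    (w : ι → ℝ) (e : ι → V) :
    ∫ x, stepAvg w e f x * g x ∂μ = ∫ x, f x * stepAvg w e g x ∂μ := by
  have hf_add i : Integrable (fun x => f (x + e i) * g x) μ :=
    (memLp_comp_add_right hf (e i)).integrable_mul hg
  have hf_sub i : Integrable (fun x => f (x - e i) * g x) μ :=
    (memLp_comp_sub_right hf (e i)).integrable_mul hg
  have hg_add i : Integrable (fun x => f x * g (x + e i)) μ :=
    hf.integrable_mul (memLp_comp_add_right hg (e i))
  have hg_sub i : Integrable (fun x => f x * g (x - e i)) μ :=
    hf.integrable_mul (memLp_comp_sub_right hg (e i))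
  have hsum_left (x : V) : stepAvg w e f x * g x =
      ∑ i, w i / 2 * (f (x + e i) * g x + f (x - e i) * g x) := by
    rw [stepAvg, Finset.sum_mul]
    exact Finset.sum_congr rfl fun i _ => by ring
  have hsum_right (x : V) : f x * stepAvg w e g x =
      ∑ i, w i / 2 * (f x * g (x + e i) + f x * g (x - e i)) := by
    rw [stepAvg, Finset.mul_sum]
    exact Finset.sum_congr rfl fun i _ => by ring
  have hleft i : Integrable (fun x => w i / 2 * (f (x + e i) * g x + f (x - e i) * g x)) μ :=
    ((hf_add i).add (hf_sub i)).const_mul _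
  have hright i : Integrable (fun x => w i / 2 * (f x * g (x + e i) + f x * g (x - e i))) μ :=
    ((hg_add i).add (hg_sub i)).const_mul _
  simp only [hsum_left, hsum_right]
  rw [integral_finsetSum _ fun i _ => hleft i, integral_finsetSum _ fun i _ => hright i]
  refine Finset.sum_congr rfl fun i _ => ?_
  rw [integral_const_mul, integral_const_mul, integral_add (hf_add i) (hf_sub i),
    integral_add (hg_add i) (hg_sub i), integral_comp_add_mul, integral_comp_sub_mul, add_comm]

theorem integral_stepAvg_iterate_mul [r.HolderConjugate s] (hf : MemLp f r μ) (hg : MemLp g s μ)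
    (w : ι → ℝ) (e : ι → V) (n : ℕ) :
    ∫ x, (stepAvg w e)^[n] f x * g x ∂μ = ∫ x, f x * (stepAvg w e)^[n] g x ∂μ := by
  induction n generalizing f with
  | zero => rfl
  | succ n ih =>
    rw [Function.iterate_succ_apply, ih (memLp_stepAvg hf w e), Function.iterate_succ_apply',
      integral_stepAvg_mul hf (memLp_stepAvg_iterate hg w e n)]

theorem integrable_stepAvg (hf : Integrable f μ) (w : ι → ℝ) (e : ι → V) :
    Integrable (stepAvg w e f) μ :=
  memLp_one_iff_integrable.1 (memLp_stepAvg (memLp_one_iff_integrable.2 hf) w e)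

theorem integral_stepAvg (hf : Integrable f μ) (hw : w ∈ stdSimplex ℝ ι) (e : ι → V) :
    ∫ x, stepAvg w e f x ∂μ = ∫ x, f x ∂μ := by
  have hadd i : Integrable (fun x => f (x + e i)) μ := hf.comp_add_right (e i)
  have hsub i : Integrable (fun x => f (x - e i)) μ := by
    simpa only [sub_eq_add_neg] using hf.comp_add_right (-e i)
  have hmid i : ∫ x, (f (x + e i) + f (x - e i)) / 2 ∂μ = ∫ x, f x ∂μ := by
    have hsub_eq : ∫ x, f (x - e i) ∂μ = ∫ x, f x ∂μ := by
      simpa only [sub_eq_add_neg] using integral_add_right_eq_self f (-e i)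
    rw [integral_div, integral_add (hadd i) (hsub i), integral_add_right_eq_self f, hsub_eq,
      add_self_div_two]
  have hterm i : Integrable (fun x => w i * ((f (x + e i) + f (x - e i)) / 2)) μ :=
    (((hadd i).add (hsub i)).div_const 2).const_mul (w i)
  simp only [stepAvg]
  rw [integral_finsetSum _ fun i _ => hterm i]
  simp only [integral_const_mul, hmid]
  rw [← Finset.sum_mul, hw.2, one_mul]

variable {u φ : V → ℝ}

theorem IsBellman.integral_stepAvg_le (hB : IsBellman p q C B) (hpq : p.HolderConjugate q)
    (hw : w ∈ stdSimplex ℝ ι) (hσ : ∀ i, |σ i| ≤ 1) (e : ι → V)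
    (hu : MemLp u (ENNReal.ofReal p) μ) (hφ : MemLp φ (ENNReal.ofReal q) μ) :
    ∫ x, B (stepAvg w e u x) (stepAvg w e φ x) ∂μ
      + ∑ i, w i * (σ i / 4 * ∫ x, centralDiff (e i) u x * centralDiff (e i) φ x ∂μ) ≤
        ∫ x, B (u x) (φ x) ∂μ := by
  have := hpq.ennrealOfReal
  have hB_int := hB.integrable_comp hpq.pos hpq.symm.pos hu hφ
  have hdiff_int i : Integrable
      (fun x => w i * (σ i / 4 * (centralDiff (e i) u x * centralDiff (e i) φ x))) μ :=
    (((memLp_centralDiff hu (e i)).integrable_mul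
      (memLp_centralDiff hφ (e i))).const_mul (σ i / 4)).const_mul (w i)
  have hmono := integral_mono
    (hB.integrable_comp hpq.pos hpq.symm.pos (memLp_stepAvg hu w e) (memLp_stepAvg hφ w e))
    ((integrable_stepAvg hB_int w e).sub (integrable_finsetSum _ fun i _ => hdiff_int i))
    (hB.comp_stepAvg_le hw hσ e u φ)
  simp only [Pi.sub_apply] at hmono
  rw [integral_sub (integrable_stepAvg hB_int w e) (integrable_finsetSum _ fun i _ => hdiff_int i),
    integral_stepAvg hB_int hw, integral_finsetSum _ fun i _ => hdiff_int i] at hmono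
  simp only [integral_const_mul] at hmono
  exact le_sub_iff_add_le.1 hmono

theorem IsBellman.sum_integral_centralDiff_le (hB : IsBellman p q C B)
    (hpq : p.HolderConjugate q) (hw : w ∈ stdSimplex ℝ ι) (hσ : ∀ i, |σ i| ≤ 1) (e : ι → V)
    (hu : MemLp u (ENNReal.ofReal p) μ) (hφ : MemLp φ (ENNReal.ofReal q) μ) (N : ℕ) :
    ∑ n ∈ Finset.range N, ∑ i, w i * (σ i / 4 *
      ∫ x, centralDiff (e i) ((stepAvg w e)^[n] u) x *
        centralDiff (e i) ((stepAvg w e)^[n] φ) x ∂μ) ≤ ∫ x, B (u x) (φ x) ∂μ := by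
  let Φ (n : ℕ) : ℝ := ∫ x, B ((stepAvg w e)^[n] u x) ((stepAvg w e)^[n] φ x) ∂μ
  have energy_step (n : ℕ) : ∑ i, w i * (σ i / 4 *
      ∫ x, centralDiff (e i) ((stepAvg w e)^[n] u) x *
        centralDiff (e i) ((stepAvg w e)^[n] φ) x ∂μ) ≤ Φ n - Φ (n + 1) := by
    have := hB.integral_stepAvg_le hpq hw hσ e (memLp_stepAvg_iterate hu w e n)
      (memLp_stepAvg_iterate hφ w e n)
    simp only [Φ, Function.iterate_succ_apply']
    linarith
  calc _ ≤ ∑ n ∈ Finset.range N, (Φ n - Φ (n + 1)) := Finset.sum_le_sum fun n _ => energy_step n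
    _ = Φ 0 - Φ N := Finset.sum_range_sub' Φ N
    _ ≤ Φ 0 := sub_le_self _ (integral_nonneg fun x => hB.nonneg _ _)

end RandomWalk

section FourierMultiplier

open scoped FourierTransform

variable {V : Type*} [NormedAddCommGroup V] [InnerProductSpace ℝ V]

theorem fourierChar_add_fourierChar_neg (t : ℝ) :
    (𝐞 t + 𝐞 (-t) : ℂ) = 2 * Real.cos (2 * Real.pi * t) := by
  simp only [Real.fourierChar_apply, Complex.ofReal_cos, Complex.two_cos]
  push_cast
  ring_nf

theorem fourierChar_sub_fourierChar_neg (t : ℝ) :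
    (𝐞 t - 𝐞 (-t) : ℂ) = 2 * Complex.I * Real.sin (2 * Real.pi * t) := by
  rw [mul_right_comm, Complex.ofReal_sin, Complex.two_sin, mul_assoc, Complex.I_mul_I]
  simp only [Real.fourierChar_apply]
  push_cast
  ring_nf

variable [MeasurableSpace V] [BorelSpace V] [FiniteDimensional ℝ V]

/-- `u` is the inverse Fourier transform of the integrable function `a`. The function `u` is
real-valued, so that the real-variable Bellman function can be applied to it. -/
structure IsFourierInv (u : V → ℝ) (a : V → ℂ) : Prop where
  integrable : Integrable a
  eq_fourierInv : ∀ x, (u x : ℂ) = 𝓕⁻ a x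

theorem fourierInv_eq_integral_mul (a : V → ℂ) (x : V) :
    𝓕⁻ a x = ∫ ξ, (𝐞 ⟪ξ, x⟫_ℝ : ℂ) * a ξ :=
  Real.fourierInv_eq a x

theorem integrable_fourierChar_mul {a : V → ℂ} (ha : Integrable a) (x : V) :
    Integrable fun ξ => (𝐞 ⟪ξ, x⟫_ℝ : ℂ) * a ξ :=
  ha.bdd_mul (c := 1) (by fun_prop) (ae_of_all _ fun _ => (Circle.norm_coe _).le)

namespace IsFourierInv

variable {u v : V → ℝ} {a b : V → ℂ}

theorem comp_add_right (h : IsFourierInv u a) (y : V) :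
    IsFourierInv (fun x => u (x + y)) fun ξ => (𝐞 ⟪ξ, y⟫_ℝ : ℂ) * a ξ where
  integrable := integrable_fourierChar_mul h.integrable y
  eq_fourierInv x := by
    rw [h.eq_fourierInv, fourierInv_eq_integral_mul, fourierInv_eq_integral_mul]
    simp only [inner_add_right, AddChar.map_add_eq_mul, Circle.coe_mul, mul_assoc]

theorem comp_sub_right (h : IsFourierInv u a) (y : V) :
    IsFourierInv (fun x => u (x - y)) fun ξ => (𝐞 (-⟪ξ, y⟫_ℝ) : ℂ) * a ξ := by
  simpa only [sub_eq_add_neg, inner_neg_right] using h.comp_add_right (-y)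

protected theorem add (hu : IsFourierInv u a) (hv : IsFourierInv v b) :
    IsFourierInv (fun x => u x + v x) fun ξ => a ξ + b ξ where
  integrable := hu.integrable.add hv.integrable
  eq_fourierInv x := by
    rw [Complex.ofReal_add, hu.eq_fourierInv, hv.eq_fourierInv]
    simp only [fourierInv_eq_integral_mul, mul_add]
    exact (integral_add (integrable_fourierChar_mul hu.integrable x)
      (integrable_fourierChar_mul hv.integrable x)).symm

protected theorem const_mul (h : IsFourierInv u a) (c : ℝ) :
    IsFourierInv (fun x => c * u x) fun ξ => c * a ξ where
  integrable := h.integrable.const_mul _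
  eq_fourierInv x := by
    rw [Complex.ofReal_mul, h.eq_fourierInv]
    simp only [fourierInv_eq_integral_mul, mul_left_comm _ (c : ℂ), integral_const_mul]

protected theorem sub (hu : IsFourierInv u a) (hv : IsFourierInv v b) :
    IsFourierInv (fun x => u x - v x) fun ξ => a ξ - b ξ := by
  simpa only [Complex.ofReal_neg, Complex.ofReal_one, neg_one_mul, ← sub_eq_add_neg] using
    hu.add (hv.const_mul (-1))

protected theorem sum {κ : Type*} (s : Finset κ) {u : κ → V → ℝ} {a : κ → V → ℂ}
    (h : ∀ i ∈ s, IsFourierInv (u i) (a i)) :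
    IsFourierInv (fun x => ∑ i ∈ s, u i x) fun ξ => ∑ i ∈ s, a i ξ where
  integrable := integrable_finsetSum s fun i hi => (h i hi).integrable
  eq_fourierInv x := by
    rw [Complex.ofReal_sum, Finset.sum_congr rfl fun i hi => (h i hi).eq_fourierInv x]
    simp only [fourierInv_eq_integral_mul, Finset.mul_sum]
    exact (integral_finsetSum s fun i hi =>
      integrable_fourierChar_mul (h i hi).integrable x).symm

end IsFourierInv

variable {ι : Type*} [Fintype ι]

/-- The Fourier symbol of `stepAvg w e`. -/
def stepSymbol (w : ι → ℝ) (e : ι → V) (ξ : V) : ℝ :=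
  ∑ i, w i * Real.cos (2 * Real.pi * ⟪ξ, e i⟫_ℝ)

namespace IsFourierInv

variable {u φ : V → ℝ} {a : V → ℂ}

protected theorem stepAvg (h : IsFourierInv u a) (w : ι → ℝ) (e : ι → V) :
    IsFourierInv (stepAvg w e u) fun ξ => stepSymbol w e ξ * a ξ := by
  have hsum := IsFourierInv.sum Finset.univ fun i _ =>
    ((h.comp_add_right (e i)).add (h.comp_sub_right (e i))).const_mul (w i / 2)
  convert hsum using 2 with x ξ
  · exact Finset.sum_congr rfl fun i _ => by ring
  · rw [stepSymbol, Complex.ofReal_sum, Finset.sum_mul]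
    refine Finset.sum_congr rfl fun i _ => ?_
    rw [← add_mul, fourierChar_add_fourierChar_neg]
    push_cast
    ring

protected theorem stepAvg_iterate (h : IsFourierInv u a) (w : ι → ℝ) (e : ι → V) (n : ℕ) :
    IsFourierInv ((stepAvg w e)^[n] u) fun ξ => (stepSymbol w e ξ : ℂ) ^ n * a ξ := by
  induction n with
  | zero => simpa only [Function.iterate_zero_apply, pow_zero, one_mul] using h
  | succ n ih =>
    simpa only [Function.iterate_succ_apply', pow_succ', mul_assoc] using ih.stepAvg w e

protected theorem centralDiff (h : IsFourierInv u a) (y : V) :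
    IsFourierInv (centralDiff y u) fun ξ =>
      2 * Complex.I * Real.sin (2 * Real.pi * ⟪ξ, y⟫_ℝ) * a ξ := by
  have hsub := (h.comp_add_right y).sub (h.comp_sub_right y)
  simp only [← sub_mul, fourierChar_sub_fourierChar_neg] at hsub
  exact hsub

end IsFourierInv

theorem integral_fourierInv_mul_eq_flip {a b : V → ℂ} (ha : Integrable a) (hb : Integrable b) :
    ∫ x, 𝓕⁻ a x * b x = ∫ ξ, a ξ * 𝓕⁻ b ξ := by
  have hflip := VectorFourier.integral_fourierIntegral_smul_eq_flip (L := -innerₗ V)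
    Real.continuous_fourierChar (by simp only [LinearMap.neg_apply, innerₗ_apply_apply]; fun_prop)
    ha hb
  simpa only [VectorFourier.fourierIntegral, LinearMap.neg_apply, LinearMap.flip_apply,
    innerₗ_apply_apply, neg_neg, Circle.smul_def, smul_eq_mul, fourierInv_eq_integral_mul,
    real_inner_comm] using hflip

/-- The density of the pairing `∫ u φ` on the frequency side, where `u` is the inverse Fourier
transform of `a`. Multiplying it by a real symbol `m` represents the pairing of `m(D) u` with
`φ`. -/
def crossSpectrum (a : V → ℂ) (φ : V → ℝ) (ξ : V) : ℝ :=
  (a ξ * 𝓕⁻ (fun x => (φ x : ℂ)) ξ).re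

theorem integrable_mul_fourierInv {a b : V → ℂ} (ha : Integrable a) (hb : Integrable b) :
    Integrable fun ξ => a ξ * 𝓕⁻ b ξ := by
  have hcont : Continuous (𝓕⁻ b) :=
    VectorFourier.fourierIntegral_continuous (L := -innerₗ V) Real.continuous_fourierChar
      (by simp only [LinearMap.neg_apply, innerₗ_apply_apply]; fun_prop) hb
  refine ha.mul_bdd (c := ∫ x, ‖b x‖) hcont.aestronglyMeasurable (ae_of_all _ fun ξ => ?_)
  rw [fourierInv_eq_integral_mul]
  refine (norm_integral_le_integral_norm _).trans_eq ?_
  simp only [norm_mul, Circle.norm_coe, one_mul]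

theorem integrable_crossSpectrum {a : V → ℂ} (ha : Integrable a) {φ : V → ℝ} (hφ : Integrable φ) :
    Integrable (crossSpectrum a φ) :=
  (integrable_mul_fourierInv ha hφ.ofReal).re

theorem crossSpectrum_real_mul (m : V → ℝ) (a : V → ℂ) (φ : V → ℝ) (ξ : V) :
    crossSpectrum (fun ξ => m ξ * a ξ) φ ξ = m ξ * crossSpectrum a φ ξ := by
  simp only [crossSpectrum, mul_assoc, Complex.re_ofReal_mul]

theorem crossSpectrum_sum {κ : Type*} (s : Finset κ) (a : κ → V → ℂ) (φ : V → ℝ) (ξ : V) :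
    crossSpectrum (fun ξ => ∑ k ∈ s, a k ξ) φ ξ = ∑ k ∈ s, crossSpectrum (a k) φ ξ := by
  simp only [crossSpectrum, Finset.sum_mul, Complex.re_sum]

theorem IsFourierInv.integral_mul_eq {u φ : V → ℝ} {a : V → ℂ} (h : IsFourierInv u a)
    (hφ : Integrable φ) : ∫ x, u x * φ x = ∫ ξ, crossSpectrum a φ ξ := by
  have hφ_ofReal : Integrable fun x => (φ x : ℂ) := hφ.ofReal
  have hpair : (∫ x, u x * φ x : ℝ) = ∫ ξ, a ξ * 𝓕⁻ (fun x => (φ x : ℂ)) ξ := by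
    rw [← integral_fourierInv_mul_eq_flip h.integrable hφ_ofReal, ← integral_complex_ofReal]
    simp only [Complex.ofReal_mul, h.eq_fourierInv]
  rw [← Complex.ofReal_re (∫ x, u x * φ x), hpair]
  exact (integral_re (integrable_mul_fourierInv h.integrable hφ_ofReal)).symm

theorem IsFourierInv.integral_centralDiff_mul_centralDiff {u φ : V → ℝ} {a : V → ℂ} {r s : ENNReal}
    [r.HolderConjugate s] (hua : IsFourierInv u a) (hu : MemLp u r) (hφ : MemLp φ s)
    (hφ_int : Integrable φ) (w : ι → ℝ) (e : ι → V) (y : V) (n : ℕ) :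
    ∫ x, centralDiff y ((stepAvg w e)^[n] u) x *
        centralDiff y ((stepAvg w e)^[n] φ) x =
      ∫ ξ, 4 * Real.sin (2 * Real.pi * ⟪ξ, y⟫_ℝ) ^ 2 * (stepSymbol w e ξ ^ 2) ^ n *
        crossSpectrum a φ ξ := by
  have hDu := memLp_centralDiff (memLp_stepAvg_iterate hu w e n) y
  have hsymbol : IsFourierInv
      ((stepAvg w e)^[n] (centralDiff y (centralDiff y ((stepAvg w e)^[n] u)))) fun ξ =>
        (-(4 * Real.sin (2 * Real.pi * ⟪ξ, y⟫_ℝ) ^ 2 * (stepSymbol w e ξ ^ 2) ^ n) : ℝ) * a ξ := by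
    convert (((hua.stepAvg_iterate w e n).centralDiff y).centralDiff y).stepAvg_iterate w e n
      using 2 with ξ
    push_cast
    linear_combination (-4 * Complex.sin (2 * Real.pi * ⟪ξ, y⟫_ℝ) ^ 2 *
      (stepSymbol w e ξ : ℂ) ^ (2 * n) * a ξ) * Complex.I_sq
  rw [← neg_inj, ← integral_centralDiff_mul hDu (memLp_stepAvg_iterate hφ w e n),
    ← integral_stepAvg_iterate_mul (memLp_centralDiff hDu y) hφ, hsymbol.integral_mul_eq hφ_int,
    ← integral_neg]
  simp only [crossSpectrum_real_mul, neg_mul]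

end FourierMultiplier

section SymbolLimit

variable {V : Type*} [NormedAddCommGroup V] [InnerProductSpace ℝ V] {ι : Type*} [Fintype ι]
  {w σ : ι → ℝ}

/-- The weighted average of the squared sines which occur in the symbols of the central
differences in the directions `e i`. -/
def sinSqAvg (w : ι → ℝ) (e : ι → V) (ξ : V) : ℝ :=
  ∑ i, w i * Real.sin (2 * Real.pi * ⟪ξ, e i⟫_ℝ) ^ 2

@[fun_prop]
theorem continuous_stepSymbol (w : ι → ℝ) (e : ι → V) : Continuous (stepSymbol w e) := by
  unfold stepSymbol
  fun_prop

@[fun_prop]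
theorem continuous_sinSqAvg (w : ι → ℝ) (e : ι → V) : Continuous (sinSqAvg w e) := by
  unfold sinSqAvg
  fun_prop

theorem abs_sinSqAvg_le (hw : w ∈ stdSimplex ℝ ι) (hσ : ∀ i, |σ i| ≤ 1) (e : ι → V) (ξ : V) :
    |sinSqAvg (w * σ) e ξ| ≤ 1 - stepSymbol w e ξ ^ 2 := by
  have jensen : stepSymbol w e ξ ^ 2 ≤ ∑ i, w i * Real.cos (2 * Real.pi * ⟪ξ, e i⟫_ℝ) ^ 2 :=
    Real.pow_arith_mean_le_arith_mean_pow_of_even _ _ _ (fun i _ => hw.1 i) hw.2 even_two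
  calc |sinSqAvg (w * σ) e ξ| ≤ ∑ i, w i * (1 - Real.cos (2 * Real.pi * ⟪ξ, e i⟫_ℝ) ^ 2) := by
        refine (Finset.abs_sum_le_sum_abs _ _).trans (Finset.sum_le_sum fun i _ => ?_)
        rw [Pi.mul_apply, ← Real.sin_sq, abs_mul, abs_mul, abs_of_nonneg (hw.1 i),
          abs_of_nonneg (sq_nonneg (Real.sin _))]
        exact mul_le_mul_of_nonneg_right (mul_le_of_le_one_right (hw.1 i) (hσ i)) (sq_nonneg _)
    _ = 1 - ∑ i, w i * Real.cos (2 * Real.pi * ⟪ξ, e i⟫_ℝ) ^ 2 := by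
        simp only [mul_sub, mul_one, Finset.sum_sub_distrib, hw.2]
    _ ≤ 1 - stepSymbol w e ξ ^ 2 := sub_le_sub_left jensen 1

theorem stepSymbol_sq_le_one (hw : w ∈ stdSimplex ℝ ι) (e : ι → V) (ξ : V) :
    stepSymbol w e ξ ^ 2 ≤ 1 :=
  sub_nonneg.1 <| (abs_nonneg _).trans <|
    abs_sinSqAvg_le hw (σ := 0) (fun _ => by simp only [Pi.zero_apply, abs_zero, zero_le_one]) e ξ

theorem abs_sinSqAvg_mul_geom_le (hw : w ∈ stdSimplex ℝ ι) (hσ : ∀ i, |σ i| ≤ 1) (e : ι → V)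
    (ξ : V) (N : ℕ) :
    |sinSqAvg (w * σ) e ξ * ∑ n ∈ Finset.range N, (stepSymbol w e ξ ^ 2) ^ n| ≤ 1 := by
  have geom_nonneg : 0 ≤ ∑ n ∈ Finset.range N, (stepSymbol w e ξ ^ 2) ^ n := by positivity
  rw [abs_mul, abs_of_nonneg geom_nonneg]
  calc _ ≤ (1 - stepSymbol w e ξ ^ 2) * ∑ n ∈ Finset.range N, (stepSymbol w e ξ ^ 2) ^ n :=
        mul_le_mul_of_nonneg_right (abs_sinSqAvg_le hw hσ e ξ) geom_nonneg
    _ = 1 - (stepSymbol w e ξ ^ 2) ^ N := mul_neg_geom_sum _ _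
    _ ≤ 1 := sub_le_self _ (by positivity)

theorem tendsto_sinSqAvg_mul_geom (hw : w ∈ stdSimplex ℝ ι) (hσ : ∀ i, |σ i| ≤ 1) (e : ι → V)
    (ξ : V) :
    Tendsto (fun N => sinSqAvg (w * σ) e ξ * ∑ n ∈ Finset.range N, (stepSymbol w e ξ ^ 2) ^ n)
      atTop (𝓝 (sinSqAvg (w * σ) e ξ / (1 - stepSymbol w e ξ ^ 2))) := by
  have hle := abs_sinSqAvg_le hw hσ e ξ
  rcases ((abs_nonneg _).trans hle).eq_or_lt with hone | hlt
  · have hzero : sinSqAvg (w * σ) e ξ = 0 := abs_nonpos_iff.1 (hone ▸ hle)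
    simp only [hzero, zero_mul, zero_div, tendsto_const_nhds]
  · exact ((hasSum_geometric_of_lt_one (sq_nonneg _) (sub_pos.1 hlt)).tendsto_sum_nat).const_mul _

theorem abs_sinSqAvg_div_le (hw : w ∈ stdSimplex ℝ ι) (hσ : ∀ i, |σ i| ≤ 1) (e : ι → V) (ξ : V) :
    |sinSqAvg (w * σ) e ξ / (1 - stepSymbol w e ξ ^ 2)| ≤ 1 :=
  le_of_tendsto' (tendsto_sinSqAvg_mul_geom hw hσ e ξ).abs (abs_sinSqAvg_mul_geom_le hw hσ e ξ)

theorem tendsto_sin_mul_div (k : ℝ) :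
    Tendsto (fun h : ℝ => Real.sin (h * k) / h) (𝓝[≠] 0) (𝓝 k) := by
  have hderiv : HasDerivAt (fun h : ℝ => Real.sin (h * k)) k 0 := by
    simpa only [zero_mul, Real.cos_zero, one_mul] using
      (hasDerivAt_mul_const (x := (0 : ℝ)) k).sin
  simpa only [div_eq_inv_mul, smul_eq_mul, zero_add, zero_mul, Real.sin_zero, sub_zero] using
    hderiv.tendsto_slope_zero

theorem tendsto_sinSqAvg_smul_div (w : ι → ℝ) (e : ι → V) (ξ : V) :
    Tendsto (fun h : ℝ => sinSqAvg w (fun i => h • e i) ξ / h ^ 2) (𝓝[≠] 0)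
      (𝓝 (4 * Real.pi ^ 2 * ∑ i, w i * ⟪ξ, e i⟫_ℝ ^ 2)) := by
  have hlim : 4 * Real.pi ^ 2 * ∑ i, w i * ⟪ξ, e i⟫_ℝ ^ 2 =
      ∑ i, w i * (2 * Real.pi * ⟪ξ, e i⟫_ℝ) ^ 2 := by
    rw [Finset.mul_sum]
    exact Finset.sum_congr rfl fun i _ => by ring
  rw [hlim]
  simp only [sinSqAvg, Finset.sum_div, mul_div_assoc, ← div_pow, inner_smul_right]
  refine tendsto_finsetSum _ fun i _ => Tendsto.const_mul _ (Tendsto.pow ?_ 2)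
  simpa only [mul_left_comm] using tendsto_sin_mul_div (2 * Real.pi * ⟪ξ, e i⟫_ℝ)

theorem one_sub_stepSymbol (hw : ∑ i, w i = 1) (e : ι → V) (ξ : V) :
    1 - stepSymbol w e ξ = 2 * sinSqAvg w (fun i => (2⁻¹ : ℝ) • e i) ξ := by
  rw [← hw, stepSymbol, sinSqAvg, ← Finset.sum_sub_distrib, Finset.mul_sum]
  refine Finset.sum_congr rfl fun i _ => ?_
  have half_angle : 2 * Real.pi * ⟪ξ, e i⟫_ℝ = 2 * (2 * Real.pi * ⟪ξ, (2⁻¹ : ℝ) • e i⟫_ℝ) := by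
    rw [inner_smul_right]
    ring
  rw [half_angle, Real.cos_two_mul, Real.cos_sq']
  ring

theorem tendsto_one_sub_stepSymbol_sq_smul_div (hw : ∑ i, w i = 1) (e : ι → V) (ξ : V) :
    Tendsto (fun h : ℝ => (1 - stepSymbol w (fun i => h • e i) ξ ^ 2) / h ^ 2) (𝓝[≠] 0)
      (𝓝 (4 * Real.pi ^ 2 * ∑ i, w i * ⟪ξ, e i⟫_ℝ ^ 2)) := by
  have hone_sub : Tendsto (fun h : ℝ => (1 - stepSymbol w (fun i => h • e i) ξ) / h ^ 2) (𝓝[≠] 0)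
      (𝓝 (2 * (4 * Real.pi ^ 2 * ∑ i, w i * ⟪ξ, (2⁻¹ : ℝ) • e i⟫_ℝ ^ 2))) := by
    simp only [one_sub_stepSymbol hw, smul_comm (2⁻¹ : ℝ), mul_div_assoc]
    exact (tendsto_sinSqAvg_smul_div w _ ξ).const_mul 2
  have hone_add : Tendsto (fun h : ℝ => 1 + stepSymbol w (fun i => h • e i) ξ) (𝓝[≠] 0)
      (𝓝 2) := by
    have hcont : Continuous fun h : ℝ => 1 + stepSymbol w (fun i => h • e i) ξ := by
      unfold stepSymbol
      fun_prop
    have hzero : 1 + stepSymbol w (fun i => (0 : ℝ) • e i) ξ = 2 := by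
      simp only [stepSymbol, zero_smul, inner_zero_right, mul_zero, Real.cos_zero, mul_one, hw]
      norm_num
    exact hzero ▸ (hcont.tendsto 0).mono_left nhdsWithin_le_nhds
  convert hone_sub.mul hone_add using 2
  · ring
  · simp only [inner_smul_right, mul_pow, mul_left_comm (w _), ← Finset.mul_sum]
    ring

theorem tendsto_sinSqAvg_smul_div_one_sub (hw : ∑ i, w i = 1) (σ : ι → ℝ) (e : ι → V) {ξ : V}
    (hξ : ∑ i, w i * ⟪ξ, e i⟫_ℝ ^ 2 ≠ 0) :
    Tendsto (fun h : ℝ => sinSqAvg (w * σ) (fun i => h • e i) ξ /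
        (1 - stepSymbol w (fun i => h • e i) ξ ^ 2)) (𝓝[≠] 0)
      (𝓝 ((∑ i, w i * σ i * ⟪ξ, e i⟫_ℝ ^ 2) / ∑ i, w i * ⟪ξ, e i⟫_ℝ ^ 2)) := by
  have hpi : 4 * Real.pi ^ 2 ≠ 0 := by positivity
  have hquot := (tendsto_sinSqAvg_smul_div (w * σ) e ξ).div
    (tendsto_one_sub_stepSymbol_sq_smul_div hw e ξ) (mul_ne_zero hpi hξ)
  rw [mul_div_mul_left _ _ hpi] at hquot
  refine hquot.congr' (eventually_mem_nhdsWithin.mono fun h hh => ?_)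
  exact div_div_div_cancel_right₀ (pow_ne_zero 2 hh) _ _

end SymbolLimit

section QuadraticMultiplier

variable {V : Type*} [NormedAddCommGroup V] [InnerProductSpace ℝ V] [MeasurableSpace V]
  [BorelSpace V] [FiniteDimensional ℝ V] {ι : Type*} [Fintype ι] {w σ : ι → ℝ} {p q C : ℝ}
  {B : ℝ → ℝ → ℝ} {u φ : V → ℝ} {a : V → ℂ}

theorem IsBellman.integral_sinSqAvg_mul_geom_le (hB : IsBellman p q C B)
    (hpq : p.HolderConjugate q) (hw : w ∈ stdSimplex ℝ ι) (hσ : ∀ i, |σ i| ≤ 1) (e : ι → V)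
    (hua : IsFourierInv u a) (hu : MemLp u (ENNReal.ofReal p)) (hφ : MemLp φ (ENNReal.ofReal q))
    (hφ_int : Integrable φ) (N : ℕ) :
    ∫ ξ, (sinSqAvg (w * σ) e ξ * ∑ n ∈ Finset.range N, (stepSymbol w e ξ ^ 2) ^ n) *
      crossSpectrum a φ ξ ≤ ∫ x, B (u x) (φ x) := by
  have := hpq.ennrealOfReal
  have hspec_int := integrable_crossSpectrum hua.integrable hφ_int
  have hterm (n : ℕ) (i : ι) : Integrable fun ξ =>
      w i * (σ i / 4 * (4 * Real.sin (2 * Real.pi * ⟪ξ, e i⟫_ℝ) ^ 2 *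
        (stepSymbol w e ξ ^ 2) ^ n * crossSpectrum a φ ξ)) := by
    refine ((hspec_int.bdd_mul (c := 4) (by fun_prop)
      (ae_of_all _ fun ξ => ?_)).const_mul _).const_mul _
    have hpow : (stepSymbol w e ξ ^ 2) ^ n ≤ 1 :=
      pow_le_one₀ (sq_nonneg _) (stepSymbol_sq_le_one hw e ξ)
    rw [Real.norm_of_nonneg (by positivity), mul_assoc]
    exact mul_le_of_le_one_right zero_le_four
      (mul_le_one₀ (Real.sin_sq_le_one _) (by positivity) hpow)
  refine le_trans (le_of_eq ?_) (hB.sum_integral_centralDiff_le hpq hw hσ e hu hφ N)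
  simp only [hua.integral_centralDiff_mul_centralDiff hu hφ hφ_int, ← integral_const_mul]
  rw [Finset.sum_congr rfl fun n _ => (integral_finsetSum _ fun i _ => hterm n i).symm,
    ← integral_finsetSum _ fun n _ => integrable_finsetSum _ fun i _ => hterm n i]
  congr with ξ
  simp only [sinSqAvg, Finset.mul_sum, Finset.sum_mul, Pi.mul_apply]
  exact Finset.sum_congr rfl fun n _ => Finset.sum_congr rfl fun i _ => by ring

theorem IsBellman.integral_quadratic_multiplier_le (hB : IsBellman p q C B)
    (hpq : p.HolderConjugate q) (hw : w ∈ stdSimplex ℝ ι) (hσ : ∀ i, |σ i| ≤ 1) {e : ι → V}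
    (he : ∀ᵐ ξ, ∑ i, w i * ⟪ξ, e i⟫_ℝ ^ 2 ≠ 0) (hua : IsFourierInv u a)
    (hu : MemLp u (ENNReal.ofReal p)) (hφ : MemLp φ (ENNReal.ofReal q)) (hφ_int : Integrable φ) :
    ∫ ξ, (∑ i, w i * σ i * ⟪ξ, e i⟫_ℝ ^ 2) / (∑ i, w i * ⟪ξ, e i⟫_ℝ ^ 2) * crossSpectrum a φ ξ ≤
      ∫ x, B (u x) (φ x) := by
  have hspec_int := integrable_crossSpectrum hua.integrable hφ_int
  have dominated {κ : Type} {l : Filter κ} [l.IsCountablyGenerated] {m : κ → V → ℝ} {m' : V → ℝ}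
      (hm : ∀ k, Measurable (m k)) (hm_le : ∀ k ξ, |m k ξ| ≤ 1)
      (hlim : ∀ᵐ ξ, Tendsto (m · ξ) l (𝓝 (m' ξ))) :
      Tendsto (fun k => ∫ ξ, m k ξ * crossSpectrum a φ ξ) l
        (𝓝 (∫ ξ, m' ξ * crossSpectrum a φ ξ)) :=
    tendsto_integral_filter_of_dominated_convergence _
      (Eventually.of_forall fun k => (hm k).aestronglyMeasurable.mul hspec_int.1)
      (Eventually.of_forall fun k => ae_of_all _ fun ξ => (norm_mul_le _ _).trans
        (mul_le_of_le_one_left (norm_nonneg _) (hm_le k ξ)))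
      hspec_int.norm (hlim.mono fun ξ hξ => hξ.mul_const _)
  have fixed_scale (h : ℝ) : ∫ ξ, sinSqAvg (w * σ) (fun i => h • e i) ξ /
      (1 - stepSymbol w (fun i => h • e i) ξ ^ 2) * crossSpectrum a φ ξ ≤ ∫ x, B (u x) (φ x) :=
    le_of_tendsto' (dominated (fun N => by fun_prop) (fun N ξ =>
        abs_sinSqAvg_mul_geom_le hw hσ _ ξ N)
      (ae_of_all _ fun ξ => tendsto_sinSqAvg_mul_geom hw hσ _ ξ))
      (hB.integral_sinSqAvg_mul_geom_le hpq hw hσ _ hua hu hφ hφ_int)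
  exact le_of_tendsto' (dominated (fun h => by fun_prop) (fun h ξ =>
      abs_sinSqAvg_div_le hw hσ _ ξ)
    (he.mono fun ξ hξ => tendsto_sinSqAvg_smul_div_one_sub hw.2 σ e hξ)) fixed_scale

end QuadraticMultiplier

section RieszTransform

variable {V : Type*} [NormedAddCommGroup V] [InnerProductSpace ℝ V]

/-- The second-order Riesz multiplier with symbol `⟪T ξ, ξ⟫ / ‖ξ‖ ^ 2`. -/
def rieszSymbol (T : V →L[ℝ] V) (ξ : V) : ℝ := ⟪T ξ, ξ⟫_ℝ / ‖ξ‖ ^ 2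

theorem abs_rieszSymbol_le (T : V →L[ℝ] V) (ξ : V) : |rieszSymbol T ξ| ≤ ‖T‖ := by
  rw [rieszSymbol, abs_div, abs_of_nonneg (sq_nonneg ‖ξ‖)]
  refine div_le_of_le_mul₀ (sq_nonneg _) (norm_nonneg T) ?_
  calc |⟪T ξ, ξ⟫_ℝ| ≤ ‖T‖ * ‖ξ‖ * ‖ξ‖ :=
        (abs_real_inner_le_norm _ _).trans
          (mul_le_mul_of_nonneg_right (T.le_opNorm ξ) (norm_nonneg ξ))
    _ = ‖T‖ * ‖ξ‖ ^ 2 := by ring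

variable [FiniteDimensional ℝ V]

theorem exists_orthonormalBasis_inner_apply_self (T : V →L[ℝ] V) :
    ∃ (b : OrthonormalBasis (Fin (Module.finrank ℝ V)) ℝ V) (σ : Fin (Module.finrank ℝ V) → ℝ),
      (∀ i, |σ i| ≤ ‖T‖) ∧ ∀ ξ, ⟪T ξ, ξ⟫_ℝ = ∑ i, σ i * ⟪ξ, b i⟫_ℝ ^ 2 := by
  set S : V →L[ℝ] V := (2⁻¹ : ℝ) • (T + star T)
  have hS : (S : V →ₗ[ℝ] V).IsSymmetric :=
    (IsSelfAdjoint.smul (IsSelfAdjoint.all _) (IsSelfAdjoint.add_star_self T)).isSymmetric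
  have hST (ξ : V) : ⟪S ξ, ξ⟫_ℝ = ⟪T ξ, ξ⟫_ℝ := by
    have hadjoint : ⟪star T ξ, ξ⟫_ℝ = ⟪T ξ, ξ⟫_ℝ :=
      (T.adjoint_inner_left ξ ξ).trans (real_inner_comm _ _)
    rw [smul_apply, add_apply, real_inner_smul_left, inner_add_left, hadjoint, ← two_mul,
      inv_mul_cancel_left₀ two_ne_zero]
  set b := hS.eigenvectorBasis rfl
  have heigen (i) : S (b i) = hS.eigenvalues rfl i • b i := hS.apply_eigenvectorBasis rfl i
  refine ⟨b, hS.eigenvalues rfl, fun i => ?_, fun ξ => ?_⟩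
  · have hrayleigh : hS.eigenvalues rfl i = ⟪T (b i), b i⟫_ℝ := by
      rw [← hST, heigen, real_inner_smul_left, real_inner_self_eq_norm_sq, b.norm_eq_one, one_pow,
        mul_one]
    simpa only [hrayleigh, b.norm_eq_one, mul_one] using
      (abs_real_inner_le_norm _ _).trans
        (mul_le_mul_of_nonneg_right (T.le_opNorm (b i)) (norm_nonneg (b i)))
  · rw [← hST, ← b.sum_inner_mul_inner]
    refine Finset.sum_congr rfl fun i _ => ?_
    have hsymm : ⟪S ξ, b i⟫_ℝ = ⟪ξ, S (b i)⟫_ℝ := hS ξ (b i)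
    rw [hsymm, heigen, real_inner_smul_right, real_inner_comm ξ]
    ring

variable [MeasurableSpace V] [BorelSpace V] {p q C : ℝ} {B : ℝ → ℝ → ℝ}

@[fun_prop]
theorem measurable_rieszSymbol (T : V →L[ℝ] V) : Measurable (rieszSymbol T) := by
  unfold rieszSymbol
  fun_prop

theorem IsBellman.integral_rieszSymbol_mul_le (hB : IsBellman p q C B)
    (hpq : p.HolderConjugate q) {T : V →L[ℝ] V} (hT : ‖T‖ ≤ 1) {u φ : V → ℝ} {a : V → ℂ}
    (hua : IsFourierInv u a) (hu : MemLp u (ENNReal.ofReal p)) (hφ : MemLp φ (ENNReal.ofReal q))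
    (hφ_int : Integrable φ) :
    ∫ ξ, rieszSymbol T ξ * crossSpectrum a φ ξ ≤ ∫ x, B (u x) (φ x) := by
  rcases subsingleton_or_nontrivial V with hV | hV
  · have hzero (ξ : V) : rieszSymbol T ξ = 0 := by
      rw [rieszSymbol, Subsingleton.elim ξ 0, inner_zero_right, zero_div]
    simpa only [hzero, zero_mul, integral_zero] using
      integral_nonneg fun x => hB.nonneg (u x) (φ x)
  obtain ⟨b, σ, hσ, hdiag⟩ := exists_orthonormalBasis_inner_apply_self T
  set n : ℝ := (Module.finrank ℝ V : ℝ)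
  have hn : 0 < n := Nat.cast_pos.2 Module.finrank_pos
  have hw : (fun _ => n⁻¹) ∈ stdSimplex ℝ (Fin (Module.finrank ℝ V)) :=
    ⟨fun _ => inv_nonneg.2 hn.le, by
      rw [Finset.sum_const, Finset.card_fin, nsmul_eq_mul, mul_inv_cancel₀ hn.ne']⟩
  have hnorm (ξ : V) : ∑ i, n⁻¹ * ⟪ξ, b i⟫_ℝ ^ 2 = n⁻¹ * ‖ξ‖ ^ 2 := by
    rw [← Finset.mul_sum, b.sum_sq_inner_left]
  have hne : ∀ᵐ ξ : V, ∑ i, n⁻¹ * ⟪ξ, b i⟫_ℝ ^ 2 ≠ 0 :=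
    (Measure.ae_ne volume 0).mono fun ξ hξ => hnorm ξ ▸
      mul_ne_zero (inv_ne_zero hn.ne') (pow_ne_zero 2 (norm_ne_zero_iff.2 hξ))
  simpa only [rieszSymbol, hnorm, mul_assoc, ← Finset.mul_sum, ← hdiag,
    mul_div_mul_left _ _ (inv_ne_zero hn.ne')] using
    hB.integral_quadratic_multiplier_le hpq hw (fun i => (hσ i).trans hT) hne hua hu hφ hφ_int

end RieszTransform

section RieszBound

/-- The duality map of `L^p`: it sends `w ∈ L^p` to an element of the dual exponent whose pairing
with `w` is `∫ |w| ^ p`. -/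
def dualPow (p t : ℝ) : ℝ := t * |t| ^ (p - 2)

variable {p q : ℝ}

theorem abs_dualPow (hp : p ≠ 1) (t : ℝ) : |dualPow p t| = |t| ^ (p - 1) := by
  rcases eq_or_ne t 0 with rfl | ht
  · rw [dualPow, zero_mul, abs_zero, Real.zero_rpow (sub_ne_zero.2 hp)]
  · have hexp : p - 1 = 1 + (p - 2) := by ring
    rw [dualPow, abs_mul, Real.abs_rpow_of_nonneg (abs_nonneg t), abs_abs, hexp,
      Real.rpow_add (abs_pos.2 ht), Real.rpow_one]

theorem mul_dualPow (hp : p ≠ 0) (t : ℝ) : t * dualPow p t = |t| ^ p := by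
  rcases eq_or_ne t 0 with rfl | ht
  · rw [zero_mul, abs_zero, Real.zero_rpow hp]
  · rw [dualPow, ← mul_assoc, ← sq, ← sq_abs, ← Real.rpow_natCast, ← Real.rpow_add (abs_pos.2 ht),
      Nat.cast_ofNat, add_sub_cancel]

theorem abs_dualPow_rpow (hpq : p.HolderConjugate q) (t : ℝ) : |dualPow p t| ^ q = |t| ^ p := by
  rw [abs_dualPow hpq.lt.ne', ← Real.rpow_mul (abs_nonneg t), hpq.sub_one_mul_conj]

section MemLp

variable {α : Type*} [MeasurableSpace α] {μ : Measure α} {w : α → ℝ}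

theorem aestronglyMeasurable_dualPow (p : ℝ) (hw : AEStronglyMeasurable w μ) :
    AEStronglyMeasurable (fun x => dualPow p (w x)) μ := by
  have := hw.aemeasurable
  unfold dualPow
  exact AEMeasurable.aestronglyMeasurable (by fun_prop)

theorem memLp_dualPow (hpq : p.HolderConjugate q) (hw : MemLp w (ENNReal.ofReal p) μ) :
    MemLp (fun x => dualPow p (w x)) (ENNReal.ofReal q) μ := by
  rw [memLp_ofReal_iff_integrable_abs_rpow hpq.symm.pos (aestronglyMeasurable_dualPow p hw.1)]
  simpa only [abs_dualPow_rpow hpq] using integrable_abs_rpow hpq.pos hw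

theorem integrable_dualPow (hp : 1 < p) (hw : MemLp w (ENNReal.ofReal (p - 1)) μ) :
    Integrable (fun x => dualPow p (w x)) μ :=
  (integrable_abs_rpow (sub_pos.2 hp) hw).mono' (aestronglyMeasurable_dualPow p hw.1)
    (ae_of_all _ fun x => (abs_dualPow hp.ne' (w x)).le)

end MemLp

theorem exists_le_mul_of_forall_mul_le (hq : 1 < q) {A : ℝ} (hA : 0 < A) :
    ∃ K, 0 < K ∧ ∀ U W : ℝ, (∀ τ, 0 < τ → τ * W ≤ A * (U + τ ^ q * W)) → W ≤ K * U := by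
  set τ : ℝ := (1 / (2 * A)) ^ (q - 1)⁻¹
  have hτ : 0 < τ := by positivity
  have hτq : τ ^ q = τ / (2 * A) := by
    have hexp : q = (q - 1) + 1 := by ring
    rw [hexp, Real.rpow_add_one hτ.ne', Real.rpow_inv_rpow (by positivity) (sub_pos.2 hq).ne']
    ring
  refine ⟨2 * A / τ, by positivity, fun U W h => ?_⟩
  have habsorb : A * (U + τ ^ q * W) = A * U + τ * W / 2 := by
    rw [hτq]
    field_simp
  have := h τ hτ
  rw [div_mul_eq_mul_div, le_div_iff₀ hτ]
  linarith

variable {V : Type*} [NormedAddCommGroup V] [InnerProductSpace ℝ V] [FiniteDimensional ℝ V]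
  [MeasurableSpace V] [BorelSpace V] {C : ℝ} {B : ℝ → ℝ → ℝ} {κ : Type*} [Fintype κ]
  {T : κ → V →L[ℝ] V} {w φ : V → ℝ} {u : κ → V → ℝ} {a : κ → V → ℂ}

theorem IsBellman.integral_mul_le_sum (hB : IsBellman p q C B) (hpq : p.HolderConjugate q)
    (hT : ∀ k, ‖T k‖ ≤ 1) (hu : ∀ k, MemLp (u k) (ENNReal.ofReal p))
    (hua : ∀ k, IsFourierInv (u k) (a k))
    (hw : IsFourierInv w fun ξ => ∑ k, rieszSymbol (T k) ξ * a k ξ)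
    (hφ : MemLp φ (ENNReal.ofReal q)) (hφ_int : Integrable φ) :
    ∫ x, w x * φ x ≤ ∑ k, ∫ x, B (u k x) (φ x) := by
  rw [hw.integral_mul_eq hφ_int]
  simp only [crossSpectrum_sum, crossSpectrum_real_mul]
  rw [integral_finsetSum _ fun k _ =>
    (integrable_crossSpectrum (hua k).integrable hφ_int).bdd_mul
      (measurable_rieszSymbol (T k)).aestronglyMeasurable
      (ae_of_all _ fun ξ => abs_rieszSymbol_le (T k) ξ)]
  exact Finset.sum_le_sum fun k _ =>
    hB.integral_rieszSymbol_mul_le hpq (hT k) (hua k) (hu k) hφ hφ_int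

variable (V κ) in
theorem exists_integral_abs_rpow_le_of_rieszSymbol (hp : 1 < p) :
    ∃ K, 0 < K ∧ ∀ (T : κ → V →L[ℝ] V) (w : V → ℝ) (u : κ → V → ℝ) (a : κ → V → ℂ),
      (∀ k, ‖T k‖ ≤ 1) → (∀ k, MemLp (u k) (ENNReal.ofReal p)) →
      (∀ k, IsFourierInv (u k) (a k)) → MemLp w (ENNReal.ofReal p) →
      MemLp w (ENNReal.ofReal (p - 1)) →
      IsFourierInv w (fun ξ => ∑ k, rieszSymbol (T k) ξ * a k ξ) →
      ∫ x, |w x| ^ p ≤ K * ∑ k, ∫ x, |u k x| ^ p := by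
  have hpq := Real.HolderConjugate.conjExponent hp
  set q := Real.conjExponent p
  obtain ⟨C, B, hC, hB⟩ := exists_isBellman hpq
  set n : ℝ := (Fintype.card κ : ℝ)
  obtain ⟨K, hK, habsorb⟩ :=
    exists_le_mul_of_forall_mul_le hpq.symm.lt (mul_pos hC (by positivity : 0 < n + 1))
  refine ⟨K, hK, fun T w u a hT hu hua hw hw' hwa => habsorb _ _ fun τ hτ => ?_⟩
  have hφ := (memLp_dualPow hpq hw).const_mul τ
  have hpair : ∫ x, w x * (τ * dualPow p (w x)) = τ * ∫ x, |w x| ^ p := by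
    simp only [mul_left_comm (w _), mul_dualPow hpq.ne_zero, integral_const_mul]
  have hφ_rpow : ∫ x, |τ * dualPow p (w x)| ^ q = τ ^ q * ∫ x, |w x| ^ p := by
    simp only [abs_mul, abs_of_pos hτ, Real.mul_rpow hτ.le (abs_nonneg _), abs_dualPow_rpow hpq,
      integral_const_mul]
  set U := ∑ k, ∫ x, |u k x| ^ p
  set W := ∫ x, |w x| ^ p
  have hU : 0 ≤ U := Finset.sum_nonneg fun k _ => integral_nonneg fun x => by positivity
  have hW : 0 ≤ W := integral_nonneg fun x => by positivity
  calc τ * W ≤ ∑ k, ∫ x, B (u k x) (τ * dualPow p (w x)) :=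
        hpair ▸ hB.integral_mul_le_sum hpq hT hu hua hwa hφ
          ((integrable_dualPow hp hw').const_mul τ)
    _ ≤ ∑ k, C * ((∫ x, |u k x| ^ p) + τ ^ q * W) := Finset.sum_le_sum fun k _ =>
        hφ_rpow ▸ hB.integral_comp_le hpq.pos hpq.symm.pos (hu k) hφ
    _ = C * (U + n * (τ ^ q * W)) := by
        rw [← Finset.mul_sum, Finset.sum_add_distrib, Finset.sum_const, Finset.card_univ,
          nsmul_eq_mul]
    _ ≤ C * (n + 1) * (U + τ ^ q * W) := by
        have hτW : 0 ≤ τ ^ q * W := mul_nonneg (by positivity) hW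
        have hnU : 0 ≤ n * U := mul_nonneg (Nat.cast_nonneg _) hU
        rw [mul_assoc]
        exact mul_le_mul_of_nonneg_left (by linarith) hC.le

end RieszBound

section SchwartzGradient

open scoped SchwartzMap LineDeriv FourierTransform Laplacian

theorem lineDerivOp_comm {E F : Type*} [NormedAddCommGroup E] [NormedSpace ℝ E]
    [NormedAddCommGroup F] [NormedSpace ℝ F] (g : 𝓢(E, F)) (v w : E) :
    ∂_{v} (∂_{w} g) = ∂_{w} (∂_{v} g) := by
  ext x
  have hsecond (v w : E) : ∂_{v} (∂_{w} g) x = fderiv ℝ (fderiv ℝ g) x v w := by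
    refine Eq.trans ?_ (iteratedFDeriv_two_apply g x ![v, w])
    rw [← SchwartzMap.iteratedLineDerivOp_eq_iteratedFDeriv]
    rfl
  rw [hsecond, hsecond]
  exact (g.smooth 2).contDiffAt.isSymmSndFDerivAt minSmoothness_of_isRCLikeNormedField.le v w

variable {V : Type*} [NormedAddCommGroup V] [InnerProductSpace ℝ V] [FiniteDimensional ℝ V]
  [MeasurableSpace V] [BorelSpace V]

/-- The Fourier transform of a real-valued Schwartz function, as a complex-valued one. -/
def fourierOfReal : 𝓢(V, ℝ) →L[ℝ] 𝓢(V, ℂ) :=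
  FourierTransform.fourierCLM ℝ 𝓢(V, ℂ) ∘L SchwartzMap.postcompCLM Complex.ofRealCLM

theorem isFourierInv_fourierOfReal (g : 𝓢(V, ℝ)) : IsFourierInv g (fourierOfReal g) where
  integrable := SchwartzMap.integrable _
  eq_fourierInv x := by
    rw [← SchwartzMap.fourierInv_coe, fourierOfReal, ContinuousLinearMap.comp_apply,
      FourierTransform.fourierCLM_apply, FourierTransform.fourierInv_fourier_eq]
    rfl

theorem fourierOfReal_lineDerivOp (g : 𝓢(V, ℝ)) (v ξ : V) :
    fourierOfReal (∂_{v} g) ξ = 2 * Real.pi * Complex.I * ⟪ξ, v⟫_ℝ * fourierOfReal g ξ := by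
  have hcomm : (∂_{v} g).postcompCLM Complex.ofRealCLM =
      ∂_{v} (g.postcompCLM Complex.ofRealCLM) := by
    ext x
    exact (DFunLike.congr_fun
      (Complex.ofRealCLM.hasFDerivAt.comp x (g.hasFDerivAt x)).fderiv v).symm
  have hgrowth : (fun x : V => ⟪x, v⟫_ℝ).HasTemperateGrowth := by fun_prop
  simp only [fourierOfReal, ContinuousLinearMap.comp_apply, FourierTransform.fourierCLM_apply,
    hcomm, SchwartzMap.fourier_lineDerivOp_eq, smul_apply,
    SchwartzMap.smulLeftCLM_apply_apply hgrowth, smul_eq_mul, Complex.real_smul, mul_assoc]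

theorem fourierOfReal_laplacian (g : 𝓢(V, ℝ)) (ξ : V) :
    fourierOfReal (Δ g) ξ = (2 * Real.pi * Complex.I) ^ 2 * (‖ξ‖ ^ 2 : ℝ) * fourierOfReal g ξ := by
  set b := stdOrthonormalBasis ℝ V
  simp only [SchwartzMap.laplacian_eq_sum b, map_sum, sum_apply, fourierOfReal_lineDerivOp,
    ← b.sum_sq_inner_left ξ, Complex.ofReal_sum, Finset.sum_mul, Finset.mul_sum, Complex.ofReal_pow]
  exact Finset.sum_congr rfl fun i _ => by ring

variable {ι : Type*} [Fintype ι]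

theorem fourierOfReal_lineDerivOp_eq_sum_rieszSymbol {b : ι → V} {f : 𝓢(V, ℝ)} {G : ι → 𝓢(V, ℝ)}
    (h : Δ f = ∑ i, ∂_{b i} (G i)) (v ξ : V) :
    fourierOfReal (∂_{v} f) ξ =
      ∑ i, rieszSymbol (InnerProductSpace.rankOne ℝ v (b i)) ξ * fourierOfReal (G i) ξ := by
  have hsymbol (i : ι) : rieszSymbol (InnerProductSpace.rankOne ℝ v (b i)) ξ =
      ⟪ξ, v⟫_ℝ / ‖ξ‖ ^ 2 * ⟪ξ, b i⟫_ℝ := by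
    rw [rieszSymbol, InnerProductSpace.rankOne_apply, real_inner_smul_left, real_inner_comm ξ v,
      real_inner_comm ξ (b i)]
    ring
  have hpoisson : 2 * Real.pi * Complex.I * (‖ξ‖ ^ 2 : ℝ) * fourierOfReal f ξ =
      ∑ i, ⟪ξ, b i⟫_ℝ * fourierOfReal (G i) ξ := by
    refine mul_left_cancel₀ Complex.two_pi_I_ne_zero ?_
    calc _ = fourierOfReal (Δ f) ξ := by rw [fourierOfReal_laplacian]; ring
      _ = ∑ i, fourierOfReal (∂_{b i} (G i)) ξ := by rw [h, map_sum, sum_apply]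
      _ = _ := by simp only [fourierOfReal_lineDerivOp, Finset.mul_sum, mul_assoc]
  simp only [hsymbol, Complex.ofReal_mul, mul_assoc, ← Finset.mul_sum, ← hpoisson]
  rw [fourierOfReal_lineDerivOp]
  rcases eq_or_ne ξ 0 with rfl | hξ
  · simp only [inner_zero_left, zero_div, Complex.ofReal_zero, mul_zero, zero_mul]
  · have hnorm : (‖ξ‖ : ℂ) ≠ 0 := Complex.ofReal_ne_zero.2 (norm_ne_zero_iff.2 hξ)
    push_cast
    field_simp

theorem exists_integral_abs_lineDerivOp_rpow_le {p : ℝ} (hp : 1 < p) (b : OrthonormalBasis ι ℝ V) :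
    ∃ K, 0 < K ∧ ∀ (v : V) (f : 𝓢(V, ℝ)) (G : ι → 𝓢(V, ℝ)), ‖v‖ ≤ 1 →
      Δ f = ∑ i, ∂_{b i} (G i) → ∫ x, |∂_{v} f x| ^ p ≤ K * ∑ i, ∫ x, |G i x| ^ p := by
  obtain ⟨K, hK, hriesz⟩ := exists_integral_abs_rpow_le_of_rieszSymbol V ι hp
  refine ⟨K, hK, fun v f G hv hfG => hriesz (fun i => InnerProductSpace.rankOne ℝ v (b i)) _ _
    (fun i => fourierOfReal (G i)) (fun i => ?_) (fun i => (G i).memLp _)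
    (fun i => isFourierInv_fourierOfReal (G i)) ((∂_{v} f).memLp _) ((∂_{v} f).memLp _) ?_⟩
  · rwa [InnerProductSpace.norm_rankOne, b.norm_eq_one, mul_one]
  · exact funext (fourierOfReal_lineDerivOp_eq_sum_rieszSymbol hfG v) ▸
      isFourierInv_fourierOfReal (∂_{v} f)

end SchwartzGradient

section VectorFields

open scoped SchwartzMap LineDeriv Laplacian Matrix

theorem eLpNorm_le_of_integral_norm_rpow_le {α E F : Type*} [MeasurableSpace α] {μ : Measure α}
    [NormedAddCommGroup E] [NormedAddCommGroup F] {p K : ℝ} {f : α → E} {g : α → F} (hp : 0 < p)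
    (hK : 0 ≤ K) (hf : MemLp f (ENNReal.ofReal p) μ) (hg : MemLp g (ENNReal.ofReal p) μ)
    (h : ∫ x, ‖f x‖ ^ p ∂μ ≤ K * ∫ x, ‖g x‖ ^ p ∂μ) :
    eLpNorm f (ENNReal.ofReal p) μ ≤
      ENNReal.ofReal (K ^ p⁻¹) * eLpNorm g (ENNReal.ofReal p) μ := by
  have hp_ne : ENNReal.ofReal p ≠ 0 := (ENNReal.ofReal_pos.2 hp).ne'
  rw [hf.eLpNorm_eq_integral_rpow_norm hp_ne ENNReal.ofReal_ne_top,
    hg.eLpNorm_eq_integral_rpow_norm hp_ne ENNReal.ofReal_ne_top,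
    ← ENNReal.ofReal_mul (by positivity), ENNReal.toReal_ofReal hp.le,
    ← Real.mul_rpow hK (integral_nonneg fun x => by positivity)]
  exact ENNReal.ofReal_le_ofReal
    (Real.rpow_le_rpow (integral_nonneg fun x => by positivity) h (by positivity))

variable {V : Type*} [NormedAddCommGroup V] [InnerProductSpace ℝ V] {ι : Type*}

/-- The vector field with Schwartz components `G i`, valued in `ℝ^ι` with the Euclidean norm. -/
def schwartzVec (G : ι → 𝓢(V, ℝ)) (x : V) : EuclideanSpace ℝ ι := WithLp.toLp 2 fun i => G i x

variable [Fintype ι]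

/-- The matrix `∂ᵢ uⱼ` of a vector field with components `u`, where `∂ᵢ` is the derivative in the
direction `b i`. -/
def gradMatrix (b : OrthonormalBasis ι ℝ V) (u : ι → 𝓢(V, ℝ)) (x : V) : Matrix ι ι ℝ :=
  Matrix.of fun i j => ∂_{b i} (u j) x

theorem sum_lineDerivOp_lineDerivOp_eq_zero {b : OrthonormalBasis ι ℝ V} {u : ι → 𝓢(V, ℝ)}
    (hdiv : ∀ x, (gradMatrix b u x).trace = 0) (v : V) : ∑ i, ∂_{b i} (∂_{v} (u i)) = 0 := by
  have hsum : ∑ i, ∂_{b i} (u i) = 0 := by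
    ext x
    rw [sum_apply]
    exact hdiv x
  simp only [fun i => lineDerivOp_comm (u i) (b i) v]
  rw [← LineDeriv.lineDerivOp_sum, hsum, LineDeriv.lineDerivOp_zero]

section Algebra

variable (b : OrthonormalBasis ι ℝ V) (u : ι → 𝓢(V, ℝ)) (e : ι → ℝ) (x : V)

theorem gradMatrix_mulVec (i : ι) :
    (gradMatrix b u x *ᵥ e) i = ∂_{b i} (∑ k, e k • u k) x := by
  simp [gradMatrix, Matrix.mulVec, dotProduct, LineDeriv.lineDerivOp_sum,
    LineDeriv.lineDerivOp_smul, sum_apply, mul_comm]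

theorem gradMatrix_transpose_mulVec (i : ι) :
    ((gradMatrix b u x)ᵀ *ᵥ e) i = ∂_{∑ k, e k • b k} (u i) x := by
  simp [gradMatrix, Matrix.mulVec, dotProduct, SchwartzMap.lineDerivOp_apply_eq_fderiv, mul_comm]

theorem toLp_gradMatrix_add_transpose_mulVec :
    (WithLp.toLp 2 ((gradMatrix b u x + (gradMatrix b u x)ᵀ) *ᵥ e) : EuclideanSpace ℝ ι) =
      schwartzVec (fun i => ∂_{b i} (∑ k, e k • u k) + ∂_{∑ k, e k • b k} (u i)) x := by
  ext i
  rw [Matrix.add_mulVec, PiLp.toLp_apply, Pi.add_apply, gradMatrix_mulVec,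
    gradMatrix_transpose_mulVec]
  rfl

theorem toLp_gradMatrix_sub_transpose_mulVec :
    (WithLp.toLp 2 ((gradMatrix b u x - (gradMatrix b u x)ᵀ) *ᵥ e) : EuclideanSpace ℝ ι) =
      schwartzVec (fun i => ∂_{b i} (∑ k, e k • u k) - ∂_{∑ k, e k • b k} (u i)) x := by
  ext i
  rw [Matrix.sub_mulVec, PiLp.toLp_apply, Pi.sub_apply, gradMatrix_mulVec,
    gradMatrix_transpose_mulVec]
  rfl

end Algebra

variable [FiniteDimensional ℝ V] [MeasurableSpace V] [BorelSpace V]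

theorem memLp_schwartzVec (G : ι → 𝓢(V, ℝ)) (p : ENNReal) : MemLp (schwartzVec G) p :=
  MemLp.of_eval_piLp fun i => (G i).memLp p volume

theorem sum_integral_abs_rpow_le_schwartzVec {p : ℝ} (hp : 0 < p) (G : ι → 𝓢(V, ℝ)) :
    ∑ i, ∫ x, |G i x| ^ p ≤ Fintype.card ι * ∫ x, ‖schwartzVec G x‖ ^ p := by
  have hG_int : Integrable fun x => ‖schwartzVec G x‖ ^ p := by
    simpa only [ENNReal.toReal_ofReal hp.le] using
      (memLp_schwartzVec G (ENNReal.ofReal p)).integrable_norm_rpow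
        (ENNReal.ofReal_pos.2 hp).ne' ENNReal.ofReal_ne_top
  rw [← nsmul_eq_mul]
  refine Finset.sum_le_card_nsmul _ _ _ fun i _ => integral_mono_of_nonneg
    (ae_of_all _ fun x => by positivity) hG_int (ae_of_all _ fun x => ?_)
  exact Real.rpow_le_rpow (abs_nonneg _) (PiLp.norm_apply_le (schwartzVec G x) i) hp.le

variable {p : ℝ}

theorem exists_eLpNorm_lineDerivOp_le (hp : 1 < p) (b : OrthonormalBasis ι ℝ V) :
    ∃ K, 0 ≤ K ∧ ∀ (v : V) (f : 𝓢(V, ℝ)) (G : ι → 𝓢(V, ℝ)), ‖v‖ ≤ 1 →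
      Δ f = ∑ i, ∂_{b i} (G i) →
      eLpNorm (∂_{v} f : 𝓢(V, ℝ)) (ENNReal.ofReal p) volume ≤
        ENNReal.ofReal K * eLpNorm (schwartzVec G) (ENNReal.ofReal p) volume := by
  obtain ⟨K, hK, hgrad⟩ := exists_integral_abs_lineDerivOp_rpow_le hp b
  have hp0 : 0 < p := zero_lt_one.trans hp
  refine ⟨(K * Fintype.card ι) ^ p⁻¹, by positivity, fun v f G hv hfG =>
    eLpNorm_le_of_integral_norm_rpow_le hp0 (by positivity) ((∂_{v} f : 𝓢(V, ℝ)).memLp _)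
      (memLp_schwartzVec G _) ?_⟩
  calc ∫ x, |∂_{v} f x| ^ p ≤ K * ∑ i, ∫ x, |G i x| ^ p := hgrad v f G hv hfG
    _ ≤ K * (Fintype.card ι * ∫ x, ‖schwartzVec G x‖ ^ p) :=
      mul_le_mul_of_nonneg_left (sum_integral_abs_rpow_le_schwartzVec hp0 G) hK.le
    _ = _ := (mul_assoc _ _ _).symm

theorem eLpNorm_schwartzVec_le_sum (hp : 1 ≤ p) (G : ι → 𝓢(V, ℝ)) :
    eLpNorm (schwartzVec G) (ENNReal.ofReal p) volume ≤
      ∑ i, eLpNorm (G i) (ENNReal.ofReal p) volume := by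
  classical
  have hsum : schwartzVec G = ∑ i, fun x => G i x • EuclideanSpace.single i (1 : ℝ) := by
    ext x i
    simp [schwartzVec, Pi.single_apply]
  rw [hsum]
  refine (eLpNorm_sum_le (fun i _ => ?_) (ENNReal.one_le_ofReal.2 hp)).trans
    (Finset.sum_le_sum fun i _ => eLpNorm_mono fun x => ?_)
  · exact ((G i).continuous.smul continuous_const).aestronglyMeasurable
  · rw [norm_smul, PiLp.norm_single, norm_one, mul_one]

theorem exists_eLpNorm_schwartzVec_lineDerivOp_le (hp : 1 < p) (b : OrthonormalBasis ι ℝ V) :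
    ∃ K, 0 ≤ K ∧ ∀ (f : 𝓢(V, ℝ)) (G : ι → 𝓢(V, ℝ)), Δ f = ∑ i, ∂_{b i} (G i) →
      eLpNorm (schwartzVec fun i => ∂_{b i} f) (ENNReal.ofReal p) volume ≤
        ENNReal.ofReal K * eLpNorm (schwartzVec G) (ENNReal.ofReal p) volume := by
  obtain ⟨K, hK, hgrad⟩ := exists_eLpNorm_lineDerivOp_le hp b
  refine ⟨Fintype.card ι * K, by positivity, fun f G hfG => ?_⟩
  rw [ENNReal.ofReal_mul (Nat.cast_nonneg _), ENNReal.ofReal_natCast, mul_assoc, ← nsmul_eq_mul]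
  exact (eLpNorm_schwartzVec_le_sum hp.le _).trans
    (Finset.sum_le_card_nsmul _ _ _ fun i _ => hgrad (b i) f G (b.norm_eq_one i).le hfG)

theorem exists_eLpNorm_schwartzVec_le (hp : 1 < p) (b : OrthonormalBasis ι ℝ V) :
    ∃ K, 0 < K ∧ ∀ (f : 𝓢(V, ℝ)) (G F : ι → 𝓢(V, ℝ)), Δ f = ∑ i, ∂_{b i} (G i) →
      (∀ i, G i + F i = (2 : ℝ) • ∂_{b i} f) →
      eLpNorm (schwartzVec F) (ENNReal.ofReal p) volume ≤
        ENNReal.ofReal K * eLpNorm (schwartzVec G) (ENNReal.ofReal p) volume := by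
  obtain ⟨K, hK, hgrad⟩ := exists_eLpNorm_schwartzVec_lineDerivOp_le hp b
  refine ⟨2 * K + 1, by positivity, fun f G F hfG hsum => ?_⟩
  have hF : schwartzVec F = (2 : ℝ) • schwartzVec (fun i => ∂_{b i} f) - schwartzVec G := by
    ext x i
    exact eq_sub_of_add_eq' (DFunLike.congr_fun (hsum i) x)
  calc eLpNorm (schwartzVec F) (ENNReal.ofReal p) volume
      ≤ eLpNorm ((2 : ℝ) • schwartzVec fun i => ∂_{b i} f) (ENNReal.ofReal p) volume +
          eLpNorm (schwartzVec G) (ENNReal.ofReal p) volume :=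
        hF ▸ eLpNorm_sub_le ((memLp_schwartzVec _ 1).1.const_smul _) (memLp_schwartzVec _ 1).1
          (ENNReal.one_le_ofReal.2 hp.le)
    _ ≤ ENNReal.ofReal 2 * (ENNReal.ofReal K *
          eLpNorm (schwartzVec G) (ENNReal.ofReal p) volume) +
          eLpNorm (schwartzVec G) (ENNReal.ofReal p) volume := by
        rw [eLpNorm_const_smul, Real.enorm_eq_ofReal zero_le_two]
        gcongr
        exact hgrad f G hfG
    _ = ENNReal.ofReal (2 * K + 1) * eLpNorm (schwartzVec G) (ENNReal.ofReal p) volume := by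
        rw [ENNReal.ofReal_add (by positivity) zero_le_one, ENNReal.ofReal_mul zero_le_two,
          ENNReal.ofReal_one, add_mul, one_mul, mul_assoc]

theorem two_strain_e3_equiv_e3_cross_vort_general {q : ℝ} (hq : 1 < q)
    (b : OrthonormalBasis ι ℝ V) :
    ∃ C : ℝ, 0 < C ∧ ∀ (u : ι → 𝓢(V, ℝ)) (e : ι → ℝ), (∀ x, (gradMatrix b u x).trace = 0) →
      ENNReal.ofReal (1 / C) *
          eLpNorm (fun x => (WithLp.toLp 2 ((gradMatrix b u x - (gradMatrix b u x)ᵀ) *ᵥ e) :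
            EuclideanSpace ℝ ι)) (ENNReal.ofReal q) volume
        ≤ eLpNorm (fun x => (WithLp.toLp 2 ((gradMatrix b u x + (gradMatrix b u x)ᵀ) *ᵥ e) :
            EuclideanSpace ℝ ι)) (ENNReal.ofReal q) volume ∧
      eLpNorm (fun x => (WithLp.toLp 2 ((gradMatrix b u x + (gradMatrix b u x)ᵀ) *ᵥ e) :
          EuclideanSpace ℝ ι)) (ENNReal.ofReal q) volume
        ≤ ENNReal.ofReal C *
          eLpNorm (fun x => (WithLp.toLp 2 ((gradMatrix b u x - (gradMatrix b u x)ᵀ) *ᵥ e) :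
            EuclideanSpace ℝ ι)) (ENNReal.ofReal q) volume := by
  obtain ⟨K, hK, hbound⟩ := exists_eLpNorm_schwartzVec_le hq b
  refine ⟨K, hK, fun u e hu => ?_⟩
  have hdiv := sum_lineDerivOp_lineDerivOp_eq_zero hu (∑ k, e k • b k)
  simp only [toLp_gradMatrix_add_transpose_mulVec, toLp_gradMatrix_sub_transpose_mulVec]
  constructor
  · rw [one_div, ENNReal.ofReal_inv_of_pos hK,
      ENNReal.inv_mul_le_iff (ENNReal.ofReal_pos.2 hK).ne' ENNReal.ofReal_ne_top]
    refine hbound (∑ k, e k • u k) _ _ ?_ fun i => ?_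
    · simp only [SchwartzMap.laplacian_eq_sum b, LineDeriv.lineDerivOp_add,
        Finset.sum_add_distrib, hdiv, add_zero]
    · rw [add_add_sub_cancel, two_smul]
  · refine hbound (∑ k, e k • u k) _ _ ?_ fun i => ?_
    · simp only [SchwartzMap.laplacian_eq_sum b, sub_eq_add_neg, LineDeriv.lineDerivOp_add,
        LineDeriv.lineDerivOp_neg, Finset.sum_add_distrib, Finset.sum_neg_distrib, hdiv, neg_zero,
        add_zero]
    · rw [sub_add_add_cancel, two_smul]

end VectorFields

section ThreeDimensional

variable (u : Fin 3 → SchwartzMap (EuclideanSpace ℝ (Fin 3)) ℝ) (x : EuclideanSpace ℝ (Fin 3))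

theorem pdW_eq_gradMatrix (i j : Fin 3) :
    pdW u i j x = gradMatrix (EuclideanSpace.basisFun (Fin 3) ℝ) u x i j := by
  rw [gradMatrix, Matrix.of_apply, EuclideanSpace.basisFun_apply,
    SchwartzMap.lineDerivOp_apply_eq_fderiv, pdW, ee]

theorem two_smul_strainW :
    (2 : ℝ) • strainW u x = gradMatrix (EuclideanSpace.basisFun (Fin 3) ℝ) u x +
      (gradMatrix (EuclideanSpace.basisFun (Fin 3) ℝ) u x).transpose := by
  ext i j
  simp only [Matrix.smul_apply, strainW, Matrix.of_apply, smul_eq_mul, pdW_eq_gradMatrix,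
    Matrix.add_apply, Matrix.transpose_apply]
  ring

theorem cross_vortW (e : Fin 3 → ℝ) :
    cross e (vortW u x) = (gradMatrix (EuclideanSpace.basisFun (Fin 3) ℝ) u x -
      (gradMatrix (EuclideanSpace.basisFun (Fin 3) ℝ) u x).transpose).mulVec e := by
  ext i
  simp only [vortW, pdW_eq_gradMatrix, Matrix.mulVec, dotProduct, Matrix.sub_apply,
    Matrix.transpose_apply, Fin.sum_univ_three]
  fin_cases i <;> dsimp [cross] <;> ring

end ThreeDimensional

/-- For every `1 < q < ∞` there is a constant `C_q > 0` such that for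
every divergence-free Schwartz vector field `u : ℝ³ → ℝ³` with strain tensor `S` and
vorticity `ω = ∇ × u`, one has the two-sided bound
`(1/C_q) ‖e₃ × ω‖_{L^q} ≤ ‖2 S e₃‖_{L^q} ≤ C_q ‖e₃ × ω‖_{L^q}`. -/
theorem two_strain_e3_equiv_e3_cross_vort (q : ℝ) (hq1 : 1 < q) :
    ∃ C : ℝ, 0 < C ∧
      ∀ u : Fin 3 → SchwartzMap (EuclideanSpace ℝ (Fin 3)) ℝ,
        (∀ x, ∑ i, pdW u i i x = 0) →
        ENNReal.ofReal (1 / C) *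
            eLpNorm (fun x => toE3 (cross ![0, 0, 1] (vortW u x))) (ENNReal.ofReal q) volume
          ≤ eLpNorm (fun x => toE3 (((2 : ℝ) • strainW u x).mulVec ![0, 0, 1]))
              (ENNReal.ofReal q) volume ∧
        eLpNorm (fun x => toE3 (((2 : ℝ) • strainW u x).mulVec ![0, 0, 1]))
            (ENNReal.ofReal q) volume
          ≤ ENNReal.ofReal C *
              eLpNorm (fun x => toE3 (cross ![0, 0, 1] (vortW u x)))
                (ENNReal.ofReal q) volume := by
  obtain ⟨C, hC, hbound⟩ := two_strain_e3_equiv_e3_cross_vort_general hq1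
    (EuclideanSpace.basisFun (Fin 3) ℝ)
  refine ⟨C, hC, fun u hu => ?_⟩
  simp only [two_smul_strainW, cross_vortW]
  exact hbound u ![0, 0, 1] fun x => by
    simpa only [pdW_eq_gradMatrix, Matrix.trace, Matrix.diag_apply] using hu x
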